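/- arXiv:2306.16881 — 2 statements merged into one kernel-verified Lean document; each statement's English description precedes it below -/
import Mathlib

section
/- If L is a logic all of whose frame conditions are among D, T, 4 (i.e., for every agent α, L(α) ⊆ {D,T,4}), then there is a computable function κ : ℕ → ℕ such that every L-satisfiable closed formula φ is satisfied at some state of an L-model with at most κ(|φ|) states, where |φ| is the number of distinct subformulas of φ. -/
/-- Formulas of the multi-agent modal μ-calculus. -/
inductive Formula (Ag PVar LVar : Type) : Type
  | prop  : PVar → Formula Ag PVar LVar
  | nprop : PVar → Formula Ag PVar LVar
  | tt    : Formula Ag PVar LVar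
  | ff    : Formula Ag PVar LVar
  | var   : LVar → Formula Ag PVar LVar
  | and   : Formula Ag PVar LVar → Formula Ag PVar LVar → Formula Ag PVar LVar
  | or    : Formula Ag PVar LVar → Formula Ag PVar LVar → Formula Ag PVar LVar
  | dia   : Ag → Formula Ag PVar LVar → Formula Ag PVar LVar
  | box   : Ag → Formula Ag PVar LVar → Formula Ag PVar LVar
  | mu    : LVar → Formula Ag PVar LVar → Formula Ag PVar LVar
  | nu    : LVar → Formula Ag PVar LVar → Formula Ag PVar LVar
  deriving DecidableEq

/-- A Kripke model: a nonempty set of states, an accessibility relation per agent,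
and a propositional valuation. -/
structure KModel (Ag PVar : Type) where
  W : Type
  h_ne : Nonempty W
  R : Ag → W → W → Prop
  V : W → Set PVar

variable {Ag PVar LVar : Type}

/-- The μ-calculus semantics of a formula relative to an environment. -/
def Formula.sem [DecidableEq LVar] (M : KModel Ag PVar) :
    Formula Ag PVar LVar → (LVar → Set M.W) → Set M.W
  | .prop p, _ => {s | p ∈ M.V s}
  | .nprop p, _ => {s | p ∉ M.V s}
  | .tt, _ => Set.univ
  | .ff, _ => ∅
  | .var X, ρ => ρ X
  | .and φ ψ, ρ => Formula.sem M φ ρ ∩ Formula.sem M ψ ρ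
  | .or φ ψ, ρ => Formula.sem M φ ρ ∪ Formula.sem M ψ ρ
  | .box a φ, ρ => {s | ∀ t, M.R a s t → t ∈ Formula.sem M φ ρ}
  | .dia a φ, ρ => {s | ∃ t, M.R a s t ∧ t ∈ Formula.sem M φ ρ}
  | .mu X φ, ρ => ⋂₀ {S | Formula.sem M φ (Function.update ρ X S) ⊆ S}
  | .nu X φ, ρ => ⋃₀ {S | S ⊆ Formula.sem M φ (Function.update ρ X S)}

/-- Free recursion variables of a formula. -/
def Formula.freeVars : Formula Ag PVar LVar → Set LVar
  | .var X => {X}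
  | .and φ ψ => Formula.freeVars φ ∪ Formula.freeVars ψ
  | .or φ ψ => Formula.freeVars φ ∪ Formula.freeVars ψ
  | .dia _ φ => Formula.freeVars φ
  | .box _ φ => Formula.freeVars φ
  | .mu X φ => Formula.freeVars φ \ {X}
  | .nu X φ => Formula.freeVars φ \ {X}
  | _ => ∅

/-- A formula is closed when it has no free recursion variables. -/
def Formula.Closed (φ : Formula Ag PVar LVar) : Prop := φ.freeVars = ∅

/-- Frame conditions D (serial), T (reflexive), B (symmetric), 4 (transitive), 5 (euclidean). -/
inductive FrameCond : Type
  | D | T | B | four | five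
  deriving DecidableEq

/-- A binary relation `R` satisfies a frame condition. -/
def SatisfiesCond {W : Type} (R : W → W → Prop) : FrameCond → Prop
  | .D => ∀ s, ∃ t, R s t
  | .T => ∀ s, R s s
  | .B => ∀ s t, R s t → R t s
  | .four => ∀ s t u, R s t → R t u → R s u
  | .five => ∀ s t u, R s t → R s u → R t u

/-- A logic assigns a set of frame conditions to each agent;
a model is an L-model when each agent's relation satisfies the agent's conditions. -/
def IsLModel (L : Ag → Set FrameCond) (M : KModel Ag PVar) : Prop :=
  ∀ a : Ag, ∀ c ∈ L a, SatisfiesCond (M.R a) c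

/-- A formula is L-satisfiable when it holds at some state of some L-model. -/
def LSatisfiable [DecidableEq LVar] (L : Ag → Set FrameCond)
    (φ : Formula Ag PVar LVar) : Prop :=
  ∃ (M : KModel Ag PVar), IsLModel L M ∧
    ∃ (w : M.W) (ρ : LVar → Set M.W), w ∈ Formula.sem M φ ρ

/-- Finite conjunction of a list of formulas (empty conjunction is tt). -/
def bigAnd : List (Formula Ag PVar LVar) → Formula Ag PVar LVar
  | [] => .tt
  | φ :: l => .and φ (bigAnd l)

/-- Syntactic negation, defined by the usual dualities. -/
def Formula.neg : Formula Ag PVar LVar → Formula Ag PVar LVar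
  | .prop p => .nprop p
  | .nprop p => .prop p
  | .tt => .ff
  | .ff => .tt
  | .var X => .var X
  | .and φ ψ => .or (Formula.neg φ) (Formula.neg ψ)
  | .or φ ψ => .and (Formula.neg φ) (Formula.neg ψ)
  | .dia a φ => .box a (Formula.neg φ)
  | .box a φ => .dia a (Formula.neg φ)
  | .mu X φ => .nu X (Formula.neg φ)
  | .nu X φ => .mu X (Formula.neg φ)

/-- Implication φ → ψ, encoded as ¬φ ∨ ψ. -/
def Formula.impl (φ ψ : Formula Ag PVar LVar) : Formula Ag PVar LVar := .or φ.neg ψ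

/-- The list of subformulas of a formula. -/
def Formula.subList : Formula Ag PVar LVar → List (Formula Ag PVar LVar)
  | .and φ ψ => .and φ ψ :: (Formula.subList φ ++ Formula.subList ψ)
  | .or φ ψ => .or φ ψ :: (Formula.subList φ ++ Formula.subList ψ)
  | .dia a φ => .dia a φ :: Formula.subList φ
  | .box a φ => .box a φ :: Formula.subList φ
  | .mu X φ => .mu X φ :: Formula.subList φ
  | .nu X φ => .nu X φ :: Formula.subList φ
  | φ => [φ]

/-- |φ|: the number of distinct subformulas of φ. -/
def fsize [DecidableEq Ag] [DecidableEq PVar] [DecidableEq LVar]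
    (φ : Formula Ag PVar LVar) : ℕ :=
  φ.subList.toFinset.card


/-! ### Rank functions for relations with infinitely recurring targets -/

section Rank

variable {X : Type}

/-- `Ranked step P`: an ordinal rank that never increases along `step` and drops whenever a step
enters `P`. -/
def Ranked (step : X → X → Prop) (P : X → Prop) : Prop :=
  ∃ r : X → Ordinal.{0}, ∀ a b, step a b → r b ≤ r a ∧ (P b → r b < r a)

theorem ranked_of_wellFounded {step : X → X → Prop} {P : X → Prop}
    (h : WellFounded fun b a => Relation.TransGen step a b ∧ P b) : Ranked step P := by
  have : IsWellFounded X (fun b a => Relation.TransGen step a b ∧ P b) := ⟨h⟩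
  refine ⟨IsWellFounded.rank (fun b a => Relation.TransGen step a b ∧ P b), fun a b hab => ⟨?_, ?_⟩⟩
  · rw [IsWellFounded.rank_eq _ b]
    apply Ordinal.iSup_le
    rintro ⟨c, hc⟩
    exact Order.succ_le_of_lt (IsWellFounded.rank_lt_of_rel
      (r := fun b a => Relation.TransGen step a b ∧ P b) ⟨hc.1.head hab, hc.2⟩)
  · intro hP
    exact IsWellFounded.rank_lt_of_rel
      (r := fun b a => Relation.TransGen step a b ∧ P b) ⟨.single hab, hP⟩

theorem ranked_of_rank {O : Type*} [LinearOrder O] [WellFoundedLT O]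
    {step : X → X → Prop} {P : X → Prop} (r : X → O)
    (h : ∀ a b, step a b → r b ≤ r a ∧ (P b → r b < r a)) : Ranked step P := by
  apply ranked_of_wellFounded
  have key : ∀ a b, Relation.TransGen step a b → r b ≤ r a ∧ (P b → r b < r a) := by
    intro a b hab
    induction hab with
    | single hab => exact h _ _ hab
    | tail _ hbc ih =>
      exact ⟨(h _ _ hbc).1.trans ih.1, fun hP => ((h _ _ hbc).2 hP).trans_le ih.1⟩
  exact Subrelation.wf (fun {b a} hba => (key a b hba.1).2 hba.2)
    (InvImage.wf r (wellFounded_lt (α := O)))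

theorem ranked_of_no_recurrent_seq {step : X → X → Prop} {P : X → Prop}
    (h : ∀ f : ℕ → X, (∀ i, step (f i) (f (i + 1))) → ¬ ∀ N, ∃ i ≥ N, P (f (i + 1))) :
    Ranked step P := by
  apply ranked_of_wellFounded
  constructor
  by_contra! hne
  obtain ⟨a₀, ha₀⟩ := hne
  set D : X → X → Prop := fun b a => Relation.TransGen step a b ∧ P b with hD
  let reach : ℕ → X → Prop := fun n => n.rec (fun a => P a ∧ ¬ Acc D a)
    (fun _ ih a => ∃ c, step a c ∧ ih c)
  have hZ : ∀ a, ¬ Acc D a → ∃ n, reach (n + 1) a := by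
    intro a ha
    obtain ⟨b, ⟨hab, hPb⟩, hb⟩ : ∃ b, D b a ∧ ¬ Acc D b := by
      by_contra! hc
      exact ha (Acc.intro _ hc)
    clear ha
    induction hab using Relation.TransGen.head_induction_on with
    | single hab => exact ⟨0, b, hab, hPb, hb⟩
    | head hac _ ih =>
      obtain ⟨n, hn⟩ := ih
      exact ⟨n + 1, _, hac, hn⟩
  classical
  let Y := {a : X // ∃ n, reach (n + 1) a}
  have hnext : ∀ a : Y, ∃ c : Y, step a.1 c.1 ∧ (P c.1 ∨ Nat.find c.2 < Nat.find a.2) := by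
    intro a
    have hs := Nat.find_spec a.2
    obtain ⟨c, hac, hc⟩ := hs
    rcases hm : Nat.find a.2 with _ | m
    · rw [hm] at hc
      exact ⟨⟨c, hZ c hc.2⟩, hac, Or.inl hc.1⟩
    · rw [hm] at hc
      refine ⟨⟨c, m, hc⟩, hac, Or.inr ?_⟩
      exact Nat.lt_succ_of_le (Nat.find_min' _ hc)
  choose g hg using hnext
  let f : ℕ → Y := fun n => g^[n] ⟨a₀, hZ a₀ ha₀⟩
  have hf : ∀ i, f (i + 1) = g (f i) := fun i => Function.iterate_succ_apply' g i _
  refine h (fun i => (f i).1) (fun i => ?_) ?_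
  · rw [hf]; exact (hg (f i)).1
  · have : ∀ m N, Nat.find (f N).2 = m → ∃ i ≥ N, P (f (i + 1)).1 := by
      intro m
      induction m using Nat.strong_induction_on with
      | _ m ih =>
        intro N hN
        have hgN := (hg (f N)).2
        rw [← hf] at hgN
        rcases hgN with hP | hlt
        · exact ⟨N, le_rfl, hP⟩
        · obtain ⟨i, hi, hP⟩ := ih _ (hN ▸ hlt) (N + 1) rfl
          exact ⟨i, by omega, hP⟩
    exact fun N => this _ N rfl

end Rank

/-! ### Determinization of recurring traces -/

section Slots

variable {Q : Type} {n : ℕ}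

/-- `F q j` says that the trace state `q` belongs to slot `j`.  The bounds `b` dominate the ranks of
the members of each slot, strictly for those members that also belong to a younger slot. -/
def SlotBound (r : Q → Ordinal.{0}) (F : Q → Fin n → Bool) (b : Fin n → Ordinal.{0}) : Prop :=
  ∀ q j, F q j = true → r q ≤ b j ∧ ((∃ i, j < i ∧ F q i = true) → r q < b j)

/-- `G` is `F`, possibly cut off above a slot `j ∈ J` occupied by `F`. -/
def CutAt (J : Set (Fin n)) (F G : Fin n → Bool) : Prop :=
  G = F ∨ ∃ j ∈ J, F j = true ∧ ∀ i, G i = (F i && decide (i ≤ j))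

theorem exists_collapse [Fintype Q] (hn : Fintype.card Q < n) (F : Q → Fin n → Bool) :
    ∃ (G : Q → Fin n → Bool) (J : Set (Fin n)), (∃ e, ∀ q, G q e = false) ∧
      (∀ q, CutAt J (F q) (G q)) ∧
      ∀ r b, SlotBound r F b →
        ∃ b', SlotBound r G b' ∧ (∀ j, b' j ≤ b j) ∧ ∀ j ∈ J, b' j < b j := by
  classical
  generalize hN : (Finset.univ.filter fun x : Q × Fin n => F x.1 x.2 = true).card = N
  induction N using Nat.strong_induction_on generalizing F with
  | _ N ih =>
  by_cases hemp : ∃ e, ∀ q, F q e = false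
  · exact ⟨F, ∅, hemp, fun q => Or.inl rfl, fun r b hb => ⟨b, hb, fun _ => le_rfl, by simp⟩⟩
  push Not at hemp
  simp only [Bool.not_eq_false] at hemp
  obtain ⟨j, hj⟩ : ∃ j, ∀ q, F q j = true → ∃ i, j < i ∧ F q i = true := by
    by_contra! hcon
    choose g hg hg' using hcon
    have hinj : Function.Injective g := by
      intro i j hij
      rcases lt_trichotomy i j with h | h | h
      · exact absurd (hij ▸ hg j) (hg' i j h)
      · exact h
      · exact absurd (hij ▸ hg i) (hg' j i h)
    have := Fintype.card_le_of_injective g hinj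
    simp at this
    omega
  let F₁ : Q → Fin n → Bool := fun q i => if F q j = true then (F q i && decide (i ≤ j)) else F q i
  have hsub : ∀ q i, F₁ q i = true → F q i = true := by
    intro q i h
    simp only [F₁] at h
    split_ifs at h <;> simp_all
  have hlt : (Finset.univ.filter fun x : Q × Fin n => F₁ x.1 x.2 = true).card < N := by
    rw [← hN]
    apply Finset.card_lt_card
    refine ⟨fun x hx => by simp at hx ⊢; exact hsub _ _ hx, fun hle => ?_⟩
    obtain ⟨q, hq⟩ := hemp j
    obtain ⟨i, hji, hi⟩ := hj q hq
    have : F₁ q i = true := by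
      simpa using hle (by simpa using hi : (q, i) ∈ _)
    simp [F₁, hq, hi] at this
    exact absurd this (not_le.2 hji)
  obtain ⟨G, J, he, hcut, hb⟩ := ih _ hlt F₁ rfl
  refine ⟨G, insert j J, he, fun q => ?_, fun r b hrb => ?_⟩
  · by_cases hq : F q j = true
    · have h₁ : ∀ i, F₁ q i = (F q i && decide (i ≤ j)) := fun i => by simp [F₁, hq]
      rcases hcut q with h | ⟨j', hj', hFj', h⟩
      · exact Or.inr ⟨j, by simp, hq, fun i => by rw [h, h₁]⟩
      · rw [h₁] at hFj'
        simp only [Bool.and_eq_true, decide_eq_true_eq] at hFj'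
        refine Or.inr ⟨j', by simp [hj'], hFj'.1, fun i => ?_⟩
        rw [h, h₁]
        by_cases hi : i ≤ j'
        · simp [hi, hi.trans hFj'.2]
        · simp [hi]
    · have h₁ : F₁ q = F q := by funext i; simp [F₁, hq]
      rcases hcut q with h | ⟨j', hj', hFj', h⟩
      · exact Or.inl (h.trans h₁)
      · rw [h₁] at hFj' h
        exact Or.inr ⟨j', by simp [hj'], hFj', h⟩
  · let c : Ordinal := (Finset.univ.filter fun q => F q j = true).sup r
    have hc : c < b j := by
      obtain ⟨q, hq⟩ := hemp j
      rw [Finset.sup_lt_iff (bot_le.trans_lt ((hrb q j hq).2 (hj q hq)))]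
      intro q hq
      simp at hq
      exact (hrb q j hq).2 (hj q hq)
    have h₁ : SlotBound r F₁ (Function.update b j c) := by
      intro q i hqi
      by_cases hij : i = j
      · subst hij
        have hqi' := hsub _ _ hqi
        simp only [Function.update_self]
        refine ⟨Finset.le_sup (f := r) (by simpa using hqi'), ?_⟩
        rintro ⟨i', hi', hF⟩
        simp [F₁, hqi'] at hF
        exact absurd hF.2 (not_le.2 hi')
      · rw [Function.update_of_ne hij]
        exact ⟨(hrb q i (hsub _ _ hqi)).1, fun ⟨i', h, h'⟩ =>
          (hrb q i (hsub _ _ hqi)).2 ⟨i', h, hsub _ _ h'⟩⟩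
    obtain ⟨b', hb', hle, hlt'⟩ := hb r _ h₁
    have hle' : ∀ i, Function.update b j c i ≤ b i := by
      intro i
      by_cases hij : i = j
      · subst hij; simpa using hc.le
      · rw [Function.update_of_ne hij]
    refine ⟨b', hb', fun i => (hle i).trans (hle' i), fun i hi => ?_⟩
    rcases hi with rfl | hi
    · exact (hle i).trans_lt (by simpa using hc)
    · exact (hlt' i hi).trans_le (hle' i)

/-- One step of a single trace through the slot structure: `F` is extended by a fresh slot recording
whether the step is strict, improved in the lexicographic order, cut, and finally stripped of the
unoccupied slot `e`. -/
def SlotStep (J : Set (Fin (n + 1))) (e : Fin (n + 1)) (σ : Bool) (F F' : Fin n → Bool) : Prop :=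
  ∃ A B : Fin (n + 1) → Bool, toLex (Fin.snoc F σ : Fin (n + 1) → Bool) ≤ toLex A ∧ CutAt J A B ∧
    B e = false ∧ F' = fun j => B (e.succAbove j)

theorem exists_slot_update [Fintype Q] (hn : Fintype.card Q = n) (F : Q → Fin n → Bool)
    (t : Bool → Q → Q → Prop) :
    ∃ (F' : Q → Fin n → Bool) (J : Set (Fin (n + 1))) (e : Fin (n + 1)),
      (∀ σ q q', t σ q q' → SlotStep J e σ (F q) (F' q')) ∧
      ∀ (r r' : Q → Ordinal.{0}) (b : Fin n → Ordinal.{0}),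
        (∀ q q', t false q q' → r' q' ≤ r q) → (∀ q q', t true q q' → r' q' < r q) →
        SlotBound r F b → ∃ b' : Fin n → Ordinal.{0}, SlotBound r' F' b' ∧
          ∀ j : Fin n, j.castSucc < e → b' j ≤ b j ∧ (j.castSucc ∈ J → b' j < b j) := by
  classical
  have hA : ∀ q', ∃ A : Fin (n + 1) → Bool,
      (∀ σ q, t σ q q' → toLex (Fin.snoc (F q) σ : Fin (n + 1) → Bool) ≤ toLex A) ∧
      ((∃ σ q, t σ q q' ∧ A = Fin.snoc (F q) σ) ∨ A = fun _ => false) := by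
    intro q'
    let s : Finset (Bool × Q) := Finset.univ.filter fun x => t x.1 x.2 q'
    by_cases hs : s.Nonempty
    · obtain ⟨x, hx, hmax⟩ := Finset.exists_max_image s
        (fun x => toLex (Fin.snoc (F x.2) x.1 : Fin (n + 1) → Bool)) hs
      refine ⟨Fin.snoc (F x.2) x.1, fun σ q h => hmax (σ, q) (by simpa [s] using h), Or.inl ?_⟩
      exact ⟨x.1, x.2, by simpa [s] using hx, rfl⟩
    · refine ⟨_, fun σ q h => ?_, Or.inr rfl⟩
      exact absurd ⟨(σ, q), by simpa [s] using h⟩ hs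
  choose A hAle hAeq using hA
  obtain ⟨G, J, ⟨e, he⟩, hcut, hb⟩ := exists_collapse (by omega) A
  refine ⟨fun q j => G q (e.succAbove j), J, e, fun σ q q' h => ?_, fun r r' b h₀ h₁ hrb => ?_⟩
  · exact ⟨A q', G q', hAle q' σ q h, hcut q', he q', rfl⟩
  · have hv : SlotBound r' A (Fin.snoc b (Finset.univ.sup r') : Fin (n + 1) → Ordinal.{0}) := by
      intro q' j hj
      rcases hAeq q' with ⟨σ, q, ht, hA⟩ | hA
      · have hle : r' q' ≤ r q := by
          cases σ
          · exact h₀ _ _ ht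
          · exact (h₁ _ _ ht).le
        rw [hA] at hj ⊢
        induction j using Fin.lastCases with
        | last =>
          simp only [Fin.snoc_last] at hj ⊢
          refine ⟨Finset.le_sup (Finset.mem_univ _), ?_⟩
          rintro ⟨i, hi, -⟩
          exact absurd (Fin.le_last i) (not_le.2 hi)
        | cast j =>
          simp only [Fin.snoc_castSucc] at hj ⊢
          refine ⟨hle.trans (hrb q j hj).1, ?_⟩
          rintro ⟨i, hi, hFi⟩
          induction i using Fin.lastCases with
          | last =>
            simp only [Fin.snoc_last] at hFi
            subst hFi
            exact (h₁ _ _ ht).trans_le (hrb q j hj).1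
          | cast i =>
            simp only [Fin.snoc_castSucc] at hFi
            exact hle.trans_lt ((hrb q j hj).2 ⟨i, by simpa using hi, hFi⟩)
      · simp [hA] at hj
    obtain ⟨b', hb', hle, hlt⟩ := hb r' _ hv
    refine ⟨fun j => b' (e.succAbove j), fun q j hj => ?_, fun j hj => ?_⟩
    · refine ⟨(hb' q _ hj).1, ?_⟩
      rintro ⟨i, hi, hFi⟩
      exact (hb' q _ hj).2 ⟨_, Fin.succAbove_lt_succAbove_iff.2 hi, hFi⟩
    · beta_reduce
      rw [Fin.succAbove_of_castSucc_lt _ _ hj]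
      have := hle j.castSucc
      have h2 := hlt j.castSucc
      simp only [Fin.snoc_castSucc] at this h2
      exact ⟨this, h2⟩

theorem SlotStep.exists_snoc {J : Set (Fin (n + 1))} {e : Fin (n + 1)} {σ σ' : Bool}
    {F F' : Fin n → Bool} (h : SlotStep J e σ F F') :
    ∃ A B : Fin (n + 1) → Bool, toLex (Fin.snoc F σ : Fin (n + 1) → Bool) ≤ toLex A ∧
      CutAt J A B ∧ B e = false ∧
      (∀ p, p < e → (Fin.snoc F' σ' : Fin (n + 1) → Bool) p = B p) ∧
      ∀ p p' : Fin (n + 1), e < p → (p' : ℕ) + 1 = p →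
        (Fin.snoc F' σ' : Fin (n + 1) → Bool) p' = B p := by
  obtain ⟨A, B, hle, hcut, he, rfl⟩ := h
  refine ⟨A, B, hle, hcut, he, fun p hp => ?_, fun p p' hp hpp' => ?_⟩
  · induction p using Fin.lastCases with
    | last => exact absurd (Fin.le_last e) (not_le.2 hp)
    | cast p => simp [Fin.succAbove_of_castSucc_lt _ _ hp]
  · induction p' using Fin.lastCases with
    | last => have := p.isLt; simp at hpp'; omega
    | cast p' =>
      have : p = p'.succ := Fin.ext (by simpa using hpp'.symm)
      subst this
      rw [Fin.snoc_castSucc, Fin.succAbove_of_lt_succ _ _ hp]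

/-- A trace with infinitely many strict steps leaves a slot that is eventually never disturbed, while
cuts below it recur. -/
theorem exists_recurrent_cut {F : ℕ → Fin n → Bool} {σ : ℕ → Bool} {J : ℕ → Set (Fin (n + 1))}
    {e : ℕ → Fin (n + 1)} (hs : ∀ i, SlotStep (J i) (e i) (σ i) (F i) (F (i + 1)))
    (hσ : ∀ N, ∃ i ≥ N, σ i = true) :
    ∃ l : ℕ, (∃ N, ∀ i ≥ N, l ≤ (e i : ℕ)) ∧ ∀ N, ∃ i ≥ N, ∃ j ∈ J i, (j : ℕ) < l := by
  by_contra! hcon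
  have hs' := fun i => (hs i).exists_snoc (σ' := σ (i + 1))
  obtain ⟨G, hG⟩ : ∃ G : ℕ → Fin (n + 1) → Bool, ∀ i, G i = Fin.snoc (F i) (σ i) := ⟨_, fun _ => rfl⟩
  simp only [← hG] at hs'
  have hlast : ∀ i, G i (Fin.last n) = σ i := fun i => by rw [hG]; simp
  choose A B hle hcut he hlo hhi using hs'
  have agree : ∀ (l : Fin (n + 1)) i, l ≤ e i → (∀ j ∈ J i, l ≤ j) →
      (∀ p < l, G (i + 1) p = G i p) → (∀ p < l, G i p = A i p) ∧
      (A i l = true → B i l = true) := by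
    intro l i h₁ h₂ h₃
    have hB : ∀ p ≤ l, B i p = A i p := by
      intro p hp
      rcases hcut i with h | ⟨j, hj, -, h⟩
      · rw [h]
      · rw [h]; simp [hp.trans (h₂ j hj)]
    refine ⟨fun p hp => ?_, fun h => (hB l le_rfl).trans h⟩
    rw [← h₃ p hp, hlo i p (hp.trans_le h₁), hB p hp.le]
  have key : ∀ l : ℕ, ∀ hl : l ≤ n, ∃ N, ∀ i ≥ N, (⟨l, by omega⟩ : Fin (n + 1)) ≤ e i ∧
      (∀ j ∈ J i, (⟨l, by omega⟩ : Fin (n + 1)) ≤ j) ∧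
      ∀ p < (⟨l, by omega⟩ : Fin (n + 1)), G (i + 1) p = G i p := by
    intro l
    induction l with
    | zero => exact fun _ => ⟨0, fun i _ => ⟨Fin.zero_le _, fun j _ => Fin.zero_le _,
        fun p hp => absurd hp (Fin.not_lt_zero p)⟩⟩
    | succ l ih =>
      intro hl
      obtain ⟨N, hN⟩ := ih (by omega)
      set k : Fin (n + 1) := ⟨l, by omega⟩ with hk
      suffices hmain : ∃ N' ≥ N, ∀ i ≥ N', k < e i ∧ G (i + 1) k = G i k by
        obtain ⟨N', hNN', hN'⟩ := hmain
        obtain ⟨N₂, hN₂⟩ := hcon (l + 1) ⟨N', fun i hi => (hN' i hi).1⟩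
        refine ⟨max N' N₂, fun i hi => ⟨(hN' i (by omega)).1, fun j hj => ?_, fun p hp => ?_⟩⟩
        · exact hN₂ i (by omega) j hj
        · rcases eq_or_lt_of_le (show p ≤ k from Nat.lt_succ_iff.1 hp) with rfl | h
          · exact (hN' i (by omega)).2
          · exact (hN i (by omega)).2.2 p h
      have hag := fun i (hi : i ≥ N) => agree k i (hN i hi).1 (hN i hi).2.1 (hN i hi).2.2
      have hpres : ∀ i ≥ N, A i k = true → k < e i ∧ G (i + 1) k = true := by
        intro i hi hA
        have hB := (hag i hi).2 hA
        have hlt : k < e i := lt_of_le_of_ne (hN i hi).1 (by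
          intro h; rw [h, he] at hB; simp at hB)
        exact ⟨hlt, (hlo i k hlt).trans hB⟩
      have hGA : ∀ i ≥ N, G i k = true → A i k = true := by
        intro i hi h
        have := Pi.apply_le_of_toLex (hle i) (hag i hi).1
        rw [h] at this
        exact this rfl
      by_cases hc : ∃ i₀ ≥ N, G i₀ k = true
      · obtain ⟨i₀, hi₀, h₀⟩ := hc
        have hall : ∀ i ≥ i₀, G i k = true := by
          intro i hi
          induction i, hi using Nat.le_induction with
          | base => exact h₀
          | succ i hi ih => exact (hpres i (by omega) (hGA i (by omega) ih)).2
        refine ⟨i₀, hi₀, fun i hi => ⟨(hpres i (by omega) (hGA i (by omega) (hall i hi))).1, ?_⟩⟩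
        rw [hall i hi, hall (i + 1) (by omega)]
      · push Not at hc
        simp only [ne_eq, Bool.not_eq_true] at hc
        have hA0 : ∀ i ≥ N, A i k = false := by
          intro i hi
          by_contra h
          have := (hpres i hi (by simpa using h)).2
          rw [hc (i + 1) (by omega)] at this
          simp at this
        have hstep : ∀ i ≥ N, ∀ p, k < p → G i p = true →
            ∃ p' ≤ p, k < p' ∧ G (i + 1) p' = true ∧ (e i = k → p' < p) := by
          intro i hi p hp hGp
          obtain ⟨q, hq, hqmin⟩ : ∃ q, (k < q ∧ q ≤ p ∧ A i q = true) ∧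
              ∀ q', k < q' → A i q' = true → q' ≤ p → q ≤ q' := by
            have hex : ∃ q, k < q ∧ q ≤ p ∧ A i q = true := by
              by_contra! hno
              obtain ⟨q, ⟨hkq, hqp, hGq⟩, hmin⟩ := WellFounded.has_min
                (wellFounded_lt (α := Fin (n + 1))) {q | k < q ∧ q ≤ p ∧ G i q = true}
                ⟨p, hp, le_rfl, hGp⟩
              have := Pi.apply_le_of_toLex (i := q) (hle i) (fun j hj => by
                rcases lt_trichotomy j k with h | rfl | h
                · exact (hag i hi).1 j h
                · exact (hc i hi).trans (hA0 i hi).symm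
                · have h1 := hno j h (hj.le.trans hqp)
                  have h2 : ¬ G i j = true := fun h' => hmin j ⟨h, hj.le.trans hqp, h'⟩ hj
                  simp only [ne_eq, Bool.not_eq_true] at h1 h2
                  exact h2.trans h1.symm)
              rw [hGq] at this
              exact hno q hkq hqp (this rfl)
            obtain ⟨q, hq, hmin⟩ := WellFounded.has_min
              (wellFounded_lt (α := Fin (n + 1))) {q | k < q ∧ q ≤ p ∧ A i q = true} hex
            exact ⟨q, hq, fun q' h1 h2 h3 => not_lt.1 (hmin q' ⟨h1, h3, h2⟩)⟩
          obtain ⟨hkq, hqp, hAq⟩ := hq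
          have hBq : B i q = true := by
            rcases hcut i with h | ⟨j, hj, hAj, h⟩
            · rw [h, hAq]
            · have hkj : k < j := lt_of_le_of_ne ((hN i hi).2.1 j hj) (by
                rintro rfl; rw [hA0 i hi] at hAj; simp at hAj)
              have hqj : q ≤ j := by
                by_contra hjq
                exact hjq (hqmin j hkj hAj ((not_le.1 hjq).le.trans hqp))
              rw [h]; simp [hAq, hqj]
          have hne : e i ≠ q := by
            intro h; rw [← h, he] at hBq; simp at hBq
          rcases lt_or_gt_of_ne hne with hlt | hgt
          · have hq0 : (q : ℕ) ≠ 0 := by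
              have : (k : ℕ) < q := hkq
              omega
            let q' : Fin (n + 1) := ⟨q - 1, by omega⟩
            have hq' : (q' : ℕ) + 1 = q := by simp [q']; omega
            have hG' : G (i + 1) q' = true := (hhi i q q' hlt hq').trans hBq
            have hkq' : k ≤ q' := by
              have h1 : (k : ℕ) < q := hkq
              have : (k : ℕ) ≤ q' := by omega
              exact this
            have hlt' : q' < p := by
              have h1 : (q : ℕ) ≤ p := hqp
              have : (q' : ℕ) < p := by omega
              exact this
            refine ⟨q', hlt'.le, lt_of_le_of_ne hkq' ?_, hG', fun _ => hlt'⟩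
            intro h
            rw [← h, hc (i + 1) (by omega)] at hG'
            simp at hG'
          · refine ⟨q, hqp, hkq, (hlo i q hgt).trans hBq, fun h => ?_⟩
            rw [h] at hgt
            exact absurd (hgt.trans hkq) (lt_irrefl _)
        have hfin : ∀ p, ∀ i ≥ N, k < p → G i p = true → ∃ N' ≥ N, ∀ i ≥ N', e i ≠ k := by
          intro p
          induction p using WellFoundedLT.induction with
          | _ p ih =>
          intro i hi hkp hGp
          by_contra! hno
          have hkeep : ∀ m, ∃ p' ≤ p, k < p' ∧ G (i + m) p' = true := by
            intro m
            induction m with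
            | zero => exact ⟨p, le_rfl, hkp, hGp⟩
            | succ m ihm =>
              obtain ⟨p', h1, h2, h3⟩ := ihm
              obtain ⟨p'', h4, h5, h6, -⟩ := hstep (i + m) (by omega) p' h2 h3
              exact ⟨p'', h4.trans h1, h5, h6⟩
          obtain ⟨i', hi', hei'⟩ := hno i hi
          obtain ⟨p', h1, h2, h3⟩ := hkeep (i' - i)
          rw [Nat.add_sub_cancel' hi'] at h3
          obtain ⟨p'', h4, h5, h6, h7⟩ := hstep i' (by omega) p' h2 h3
          obtain ⟨N', hN'N, hN'⟩ := ih p'' ((h7 hei').trans_le h1) (i' + 1) (by omega) h5 h6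
          obtain ⟨i'', h8, h9⟩ := hno N' hN'N
          exact hN' i'' h8 h9
        obtain ⟨i, hi, hσi⟩ := hσ N
        obtain ⟨N', hN'N, hN'⟩ := hfin (Fin.last n) i hi (by
          show l < n
          omega) ((hlast i).trans hσi)
        refine ⟨N', hN'N, fun i hi => ⟨lt_of_le_of_ne (hN i (by omega)).1 (hN' i hi).symm, ?_⟩⟩
        rw [hc i (by omega), hc (i + 1) (by omega)]
  obtain ⟨N, hN⟩ := key n le_rfl
  obtain ⟨i, hi, hσi⟩ := hσ N
  obtain ⟨h1, h2, h3⟩ := hN i hi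
  have hlst : (⟨n, by omega⟩ : Fin (n + 1)) = Fin.last n := rfl
  rw [hlst] at h1 h2 h3
  obtain ⟨h4, h5⟩ := agree _ i h1 h2 h3
  have h6 := Pi.apply_le_of_toLex (hle i) h4
  rw [hlast, hσi] at h6
  have h7 := h5 (h6 rfl)
  rw [← Fin.last_le_iff.1 h1, he] at h7
  simp at h7

theorem not_strictly_decreasing_frequently {O : Type*} [LinearOrder O] [WellFoundedLT O] (x : ℕ → O)
    (N : ℕ) (h : ∀ i ≥ N, x (i + 1) ≤ x i) (h' : ∀ M, ∃ i ≥ M, x (i + 1) < x i) : False := by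
  obtain ⟨_, ⟨i, hi, rfl⟩, hmin⟩ := WellFounded.has_min (wellFounded_lt (α := O))
    (x '' {i | N ≤ i}) ⟨x N, N, le_refl N, rfl⟩
  have hanti : ∀ j ≥ i, x j ≤ x i := by
    intro j hj
    induction j, hj using Nat.le_induction with
    | base => exact le_rfl
    | succ j hj ih => exact (h j (le_trans hi hj)).trans ih
  obtain ⟨j, hj, hlt⟩ := h' i
  exact hmin (x (j + 1)) ⟨j + 1, (hi.trans hj).trans (Nat.le_succ j), rfl⟩ (hlt.trans_le (hanti j hj))

/-- The bounds of the slots below `l`. -/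
noncomputable def slotMask (l : ℕ) (b : Fin n → Ordinal.{0}) : Fin n → Ordinal.{0} :=
  fun j => if (j : ℕ) < l then b j else 0

theorem slotMask_toLex_mono (l : ℕ) {b b' : Fin n → Ordinal.{0}} (h : toLex b ≤ toLex b') :
    toLex (slotMask l b) ≤ toLex (slotMask l b') := by
  rcases h.eq_or_lt with h | h
  · rw [toLex_inj.1 h]
  · obtain ⟨i, hi, hlt⟩ := h
    by_cases hil : (i : ℕ) < l
    · refine le_of_lt ⟨i, fun j hj => ?_, ?_⟩
      · have := hi j hj
        simp only [Pi.toLex_apply] at this ⊢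
        simp [slotMask, this]
      · simpa [slotMask, hil] using hlt
    · refine le_of_eq (congrArg toLex ?_)
      funext j
      by_cases hj : (j : ℕ) < l
      · have : j < i := by
          show (j : ℕ) < i
          omega
        simpa [slotMask, hj] using hi j this
      · simp [slotMask, hj]

/-- A labelled structure whose traces are ranked can be folded, preserving labels, to a finite one
without traces having infinitely many strict steps. -/
theorem exists_finite_folding {N Δ Λ : Type} [Fintype Λ] [Fintype Q] (lab : N → Λ)
    (child : N → Δ → N) (t : Λ → Δ → Bool → Q → Q → Prop) (r : N → Q → Ordinal.{0})
    (h₀ : ∀ n d q q', t (lab n) d false q q' → r (child n d) q' ≤ r n q)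
    (h₁ : ∀ n d q q', t (lab n) d true q q' → r (child n d) q' < r n q) :
    ∃ (S : Type) (_ : Finite S) (π : S → N) (ch : S → Δ → S),
      Nat.card S ≤ Fintype.card Λ * 2 ^ (Fintype.card Q * Fintype.card Q) ∧
      (∀ s d, lab (π (ch s d)) = lab (child (π s) d)) ∧ (∀ n, ∃ s, lab (π s) = lab n) ∧
      ∀ (s : ℕ → S) (d : ℕ → Δ) (σ : ℕ → Bool) (q : ℕ → Q), (∀ i, s (i + 1) = ch (s i) (d i)) →
        (∀ i, t (lab (π (s i))) (d i) (σ i) (q i) (q (i + 1))) →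
        ¬ ∀ M, ∃ i ≥ M, σ i = true := by
  classical
  let k := Fintype.card Q
  choose U J e hU hb using fun (x : Λ × (Q → Fin k → Bool)) (d : Δ) =>
    exists_slot_update (n := k) rfl x.2 (t x.1 d)
  let S := {x : Λ × (Q → Fin k → Bool) // ∃ n b, lab n = x.1 ∧ SlotBound (r n) x.2 b}
  have hmin : ∀ s : S, ∃ (n : N) (b : Fin k → Ordinal.{0}), lab n = s.1.1 ∧ SlotBound (r n) s.1.2 b ∧
      ∀ n' b', lab n' = s.1.1 → SlotBound (r n') s.1.2 b' → toLex b ≤ toLex b' := by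
    intro s
    obtain ⟨n₀, b₀, hn₀, hb₀⟩ := s.2
    obtain ⟨b, ⟨n, hn, hnb⟩, hbmin⟩ := WellFounded.has_min
      (wellFounded_lt (α := Lex (Fin k → Ordinal.{0})))
      {b | ∃ n, lab n = s.1.1 ∧ SlotBound (r n) s.1.2 (ofLex b)} ⟨toLex b₀, n₀, hn₀, hb₀⟩
    exact ⟨n, ofLex b, hn, hnb, fun n' b' h h' => not_lt.1 (hbmin (toLex b') ⟨n', h, h'⟩)⟩
  choose π β hπ hβ hβmin using hmin
  have hnext : ∀ (s : S) (d : Δ), ∃ b' : Fin k → Ordinal.{0},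
      SlotBound (r (child (π s) d)) (U s.1 d) b' ∧
      ∀ j : Fin k, j.castSucc < e s.1 d → b' j ≤ β s j ∧ (j.castSucc ∈ J s.1 d → b' j < β s j) := by
    intro s d
    refine hb s.1 d (r (π s)) _ (β s) (fun q q' h => ?_) (fun q q' h => ?_) (hβ s)
    · exact h₀ _ _ _ _ (by rwa [hπ])
    · exact h₁ _ _ _ _ (by rwa [hπ])
  choose c hc hcβ using hnext
  let ch : S → Δ → S := fun s d =>
    ⟨(lab (child (π s) d), U s.1 d), child (π s) d, c s d, rfl, hc s d⟩
  refine ⟨S, inferInstance, π, ch, ?_, fun s d => hπ (ch s d), fun n => ?_, ?_⟩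
  · refine (Nat.card_le_card_of_injective (Subtype.val : S → _) Subtype.val_injective).trans ?_
    rw [Nat.card_eq_fintype_card, Fintype.card_prod, Fintype.card_fun, Fintype.card_fun,
      Fintype.card_bool, Fintype.card_fin, ← pow_mul]
  · exact ⟨⟨(lab n, fun _ _ => false), n, 0, rfl, fun _ _ h => by simp at h⟩, hπ _⟩
  · intro s d σ q hs ht hσ
    have hstep : ∀ i, SlotStep (J (s i).1 (d i)) (e (s i).1 (d i)) (σ i) ((s i).1.2 (q i))
        ((s (i + 1)).1.2 (q (i + 1))) := by
      intro i
      rw [hs i]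
      exact hU (s i).1 (d i) _ _ _ (by rw [← hπ]; exact ht i)
    obtain ⟨l, ⟨M, hM⟩, hJ⟩ := exists_recurrent_cut hstep hσ
    have hx : ∀ i, toLex (slotMask l (β (s (i + 1)))) ≤ toLex (slotMask l (c (s i) (d i))) := by
      intro i
      apply slotMask_toLex_mono
      rw [hs i]
      exact hβmin (ch (s i) (d i)) (child (π (s i)) (d i)) _ rfl (hc _ _)
    have hy : ∀ i ≥ M, slotMask l (c (s i) (d i)) ≤ slotMask l (β (s i)) := by
      intro i hi j
      by_cases hj : (j : ℕ) < l
      · simpa [slotMask, hj] using (hcβ (s i) (d i) j (hj.trans_le (hM i hi))).1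
      · simp [slotMask, hj]
    refine not_strictly_decreasing_frequently (fun i => toLex (slotMask l (β (s i)))) M
      (fun i hi => (hx i).trans (Pi.toLex_monotone (hy i hi))) (fun M' => ?_)
    obtain ⟨i, hi, j, hj, hjl⟩ := hJ (max M M')
    refine ⟨i, by omega, (hx i).trans_lt (Pi.toLex_strictMono ?_)⟩
    have hje := hM i (by omega)
    have hjk : (j : ℕ) < k := by
      have := (e (s i).1 (d i)).isLt
      omega
    refine Pi.lt_def.2 ⟨hy i (by omega), ⟨j, hjk⟩, ?_⟩
    have := (hcβ (s i) (d i) ⟨j, hjk⟩ (show (j : ℕ) < _ from hjl.trans_le hje)).2 hj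
    simpa [slotMask, hjl] using this

theorem exists_blocks {P : ℕ → Prop} (hP : ∀ N, ∃ i ≥ N, P i) :
    ∃ u m : ℕ → ℕ, (∀ k, u k ≤ m k ∧ P (m k) ∧ ∀ j, u k ≤ j → j < m k → ¬ P j) ∧
      (∀ k, u (k + 1) = m k + 1) := by
  classical
  have h : ∀ v, ∃ i, v ≤ i ∧ P i ∧ ∀ j, v ≤ j → j < i → ¬ P j := fun v =>
    ⟨Nat.find (hP v), (Nat.find_spec (hP v)).1, (Nat.find_spec (hP v)).2,
      fun j hj hj' hPj => Nat.find_min (hP v) hj' ⟨hj, hPj⟩⟩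
  choose g hg using h
  let u : ℕ → ℕ := fun k => k.rec 0 fun _ v => g v + 1
  exact ⟨u, fun k => g (u k), fun k => hg (u k), fun k => rfl⟩

/-- A labelled structure with ranked traces can be folded, preserving labels, to a finite one without
traces that descend infinitely often.  Traces may stay at a state; each of their steps has to descend
at all states with the current label. -/
theorem exists_finite_folding_of_rank {N Δ Λ : Type} [Fintype Λ] [Fintype Q] (lab : N → Λ)
    (child : N → Δ → N) (r : N → Q → Ordinal.{0}) :
    ∃ (S : Type) (_ : Finite S) (π : S → N) (ch : S → Δ → S),
      Nat.card S ≤ Fintype.card Λ * 2 ^ (Fintype.card Q * Fintype.card Q) ∧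
      (∀ s d, lab (π (ch s d)) = lab (child (π s) d)) ∧ (∀ n, ∃ s, lab (π s) = lab n) ∧
      ∀ (s : ℕ → S) (q : ℕ → Q) (hit : ℕ → Prop),
        (∀ i, (s (i + 1) = s i ∧ ∀ w, lab w = lab (π (s i)) →
            r w (q (i + 1)) ≤ r w (q i) ∧ (hit i → r w (q (i + 1)) < r w (q i))) ∨
          ∃ d, s (i + 1) = ch (s i) d ∧ ∀ w, lab w = lab (π (s i)) →
            r (child w d) (q (i + 1)) ≤ r w (q i) ∧
              (hit i → r (child w d) (q (i + 1)) < r w (q i))) →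
        ¬ ∀ M, ∃ i ≥ M, hit i := by
  classical
  obtain ⟨S, hfin, π, ch, hcard, hch, hcov, hbad⟩ := exists_finite_folding (Q := Q) lab child
    (fun l d σ q q' => ∀ w, lab w = l →
      r (child w d) q' ≤ r w q ∧ (σ = true → r (child w d) q' < r w q)) r
    (fun n d q q' h => (h n rfl).1) (fun n d q q' h => (h n rfl).2 rfl)
  refine ⟨S, hfin, π, ch, hcard, hch, hcov, fun s q hit hstep hhit => ?_⟩
  let Move : ℕ → Prop := fun i => ∃ d, s (i + 1) = ch (s i) d ∧ ∀ w, lab w = lab (π (s i)) →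
    r (child w d) (q (i + 1)) ≤ r w (q i) ∧ (hit i → r (child w d) (q (i + 1)) < r w (q i))
  have hstay : ∀ i, ¬ Move i → s (i + 1) = s i ∧ ∀ w, lab w = lab (π (s i)) →
      r w (q (i + 1)) ≤ r w (q i) ∧ (hit i → r w (q (i + 1)) < r w (q i)) :=
    fun i hi => (hstep i).resolve_right hi
  by_cases hmove : ∀ M, ∃ i ≥ M, Move i
  · obtain ⟨u, m, hm, hu⟩ := exists_blocks hmove
    have hblock : ∀ k j, u k ≤ j → j ≤ m k → s j = s (u k) ∧ ∀ w, lab w = lab (π (s (u k))) →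
        r w (q j) ≤ r w (q (u k)) ∧
        ((∃ i, u k ≤ i ∧ i < j ∧ hit i) → r w (q j) < r w (q (u k))) := by
      intro k j hj
      induction j, hj using Nat.le_induction with
      | base =>
        exact fun _ => ⟨rfl, fun w _ => ⟨le_rfl, fun ⟨i, h₁, h₂, _⟩ => absurd h₁ (by omega)⟩⟩
      | succ j hj ih =>
        intro hjm
        obtain ⟨h₁, h₂⟩ := ih (by omega)
        obtain ⟨h₃, h₄⟩ := hstay j ((hm k).2.2 j hj (by omega))
        refine ⟨h₃.trans h₁, fun w hw => ?_⟩
        obtain ⟨h₅, h₆⟩ := h₂ w hw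
        obtain ⟨h₇, h₈⟩ := h₄ w (by rw [h₁]; exact hw)
        refine ⟨h₇.trans h₅, ?_⟩
        rintro ⟨i, hi, hij, hh⟩
        rcases Nat.lt_succ_iff_lt_or_eq.1 hij with h | rfl
        · exact h₇.trans_lt (h₆ ⟨i, hi, h, hh⟩)
        · exact (h₈ hh).trans_le h₅
    choose d hd hdr using fun k => (hm k).2.1
    refine hbad (fun k => s (u k)) d (fun k => decide (∃ i, u k ≤ i ∧ i < u (k + 1) ∧ hit i))
      (fun k => q (u k)) (fun k => ?_) (fun k w hw => ?_) (fun M => ?_)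
    · rw [hu, hd, (hblock k (m k) (hm k).1 le_rfl).1]
    · obtain ⟨h₁, h₂⟩ := hblock k (m k) (hm k).1 le_rfl
      obtain ⟨h₃, h₄⟩ := h₂ w hw
      obtain ⟨h₅, h₆⟩ := hdr k w (by rw [h₁]; exact hw)
      rw [hu]
      refine ⟨h₅.trans h₃, fun h => ?_⟩
      obtain ⟨i, hi, hi', hh⟩ := of_decide_eq_true h
      rcases Nat.lt_succ_iff_lt_or_eq.1 hi' with h | rfl
      · exact h₅.trans_lt (h₄ ⟨i, hi, h, hh⟩)
      · exact (h₆ hh).trans_le h₃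
    · have humono : StrictMono u := strictMono_nat_of_lt_succ fun k => by
        rw [hu]; exact Nat.lt_succ_of_le (hm k).1
      obtain ⟨i, hi, hh⟩ := hhit (u M)
      have hex : ∃ k, i < u (k + 1) :=
        ⟨i, (Nat.lt_succ_self i).trans_le (humono.id_le (i + 1))⟩
      have hlt := Nat.find_spec hex
      have hge : M ≤ Nat.find hex := by
        by_contra hlt'
        have := humono.monotone (show Nat.find hex + 1 ≤ M by omega)
        omega
      refine ⟨Nat.find hex, hge, decide_eq_true ⟨i, ?_, hlt, hh⟩⟩
      rcases Nat.eq_or_lt_of_le hge with h | h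
      · rw [← h]; exact hi
      · obtain ⟨k, hk⟩ : ∃ k, Nat.find hex = k + 1 := ⟨Nat.find hex - 1, by omega⟩
        have := Nat.find_min hex (m := k) (by omega)
        rw [hk]
        omega
  · push Not at hmove
    obtain ⟨M, hM⟩ := hmove
    have hconst : ∀ i ≥ M, s i = s M := by
      intro i hi
      induction i, hi using Nat.le_induction with
      | base => rfl
      | succ i hi ih => exact (hstay i (hM i hi)).1.trans ih
    have hdesc := fun i (hi : i ≥ M) => (hstay i (hM i hi)).2 (π (s M)) (by rw [hconst i hi])
    refine not_strictly_decreasing_frequently (fun i => r (π (s M)) (q i)) M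
      (fun i hi => (hdesc i hi).1) fun M' => ?_
    obtain ⟨i, hi, hh⟩ := hhit (max M M')
    exact ⟨i, by omega, (hdesc i (by omega)).2 hh⟩

end Slots

/-! ### Positions of a formula -/

/-- The number of nodes of the syntax tree. -/
def Formula.treeSize : Formula Ag PVar LVar → ℕ
  | .and φ ψ => 1 + Formula.treeSize φ + Formula.treeSize ψ
  | .or φ ψ => 1 + Formula.treeSize φ + Formula.treeSize ψ
  | .dia _ φ => 1 + Formula.treeSize φ
  | .box _ φ => 1 + Formula.treeSize φ
  | .mu _ φ => 1 + Formula.treeSize φ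
  | .nu _ φ => 1 + Formula.treeSize φ
  | _ => 1

/-- The instruction at a node of the syntax tree; nodes are numbered in preorder.  Recursion variables
jump to their binder, and `mu t e` records the body `t` and the end `e` of its scope. -/
inductive Instr (Ag PVar : Type) : Type
  | prop : PVar → Instr Ag PVar
  | nprop : PVar → Instr Ag PVar
  | tt : Instr Ag PVar
  | ff : Instr Ag PVar
  | goto : ℕ → Instr Ag PVar
  | and : ℕ → ℕ → Instr Ag PVar
  | or : ℕ → ℕ → Instr Ag PVar
  | dia : Ag → ℕ → Instr Ag PVar
  | box : Ag → ℕ → Instr Ag PVar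
  | mu : ℕ → ℕ → Instr Ag PVar

/-- The instruction numbered `x` of a formula placed at offset `o`. -/
def Formula.code [DecidableEq LVar] :
    Formula Ag PVar LVar → (LVar → ℕ) → ℕ → ℕ → Instr Ag PVar
  | .prop p, _, _, _ => .prop p
  | .nprop p, _, _, _ => .nprop p
  | .tt, _, _, _ => .tt
  | .ff, _, _, _ => .ff
  | .var X, β, _, _ => .goto (β X)
  | .and φ ψ, β, o, x =>
    if x = o then .and (o + 1) (o + 1 + φ.treeSize) else
    if x < o + 1 + φ.treeSize then φ.code β (o + 1) x else ψ.code β (o + 1 + φ.treeSize) x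
  | .or φ ψ, β, o, x =>
    if x = o then .or (o + 1) (o + 1 + φ.treeSize) else
    if x < o + 1 + φ.treeSize then φ.code β (o + 1) x else ψ.code β (o + 1 + φ.treeSize) x
  | .dia a φ, β, o, x => if x = o then .dia a (o + 1) else φ.code β (o + 1) x
  | .box a φ, β, o, x => if x = o then .box a (o + 1) else φ.code β (o + 1) x
  | .mu X φ, β, o, x =>
    if x = o then .mu (o + 1) (o + 1 + φ.treeSize) else φ.code (Function.update β X o) (o + 1) x
  | .nu X φ, β, o, x =>
    if x = o then .goto (o + 1) else φ.code (Function.update β X o) (o + 1) x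

/-- The program `K` contains the given formula at offset `o`, where `β` locates the binders of the
free variables. -/
def Occ [DecidableEq LVar] (K : ℕ → Instr Ag PVar) :
    Formula Ag PVar LVar → (LVar → ℕ) → ℕ → Prop
  | .prop p, _, o => K o = .prop p
  | .nprop p, _, o => K o = .nprop p
  | .tt, _, o => K o = .tt
  | .ff, _, o => K o = .ff
  | .var X, β, o => K o = .goto (β X)
  | .and φ ψ, β, o => K o = .and (o + 1) (o + 1 + φ.treeSize) ∧ Occ K φ β (o + 1) ∧
      Occ K ψ β (o + 1 + φ.treeSize)
  | .or φ ψ, β, o => K o = .or (o + 1) (o + 1 + φ.treeSize) ∧ Occ K φ β (o + 1) ∧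
      Occ K ψ β (o + 1 + φ.treeSize)
  | .dia a φ, β, o => K o = .dia a (o + 1) ∧ Occ K φ β (o + 1)
  | .box a φ, β, o => K o = .box a (o + 1) ∧ Occ K φ β (o + 1)
  | .mu X φ, β, o => K o = .mu (o + 1) (o + 1 + φ.treeSize) ∧
      Occ K φ (Function.update β X o) (o + 1)
  | .nu X φ, β, o => K o = .goto (o + 1) ∧ Occ K φ (Function.update β X o) (o + 1)

theorem Formula.treeSize_pos (φ : Formula Ag PVar LVar) : 0 < φ.treeSize := by
  cases φ <;> simp only [Formula.treeSize] <;> omega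

theorem Occ.congr [DecidableEq LVar] {K K' : ℕ → Instr Ag PVar} {φ : Formula Ag PVar LVar}
    {β : LVar → ℕ} {o : ℕ} (h : Occ K φ β o)
    (hK : ∀ x, o ≤ x → x < o + φ.treeSize → K' x = K x) : Occ K' φ β o := by
  induction φ generalizing β o with
  | prop | nprop | tt | ff | var =>
    exact (hK o le_rfl (by simp [Formula.treeSize])).trans h
  | and φ ψ ih₁ ih₂ | or φ ψ ih₁ ih₂ =>
    simp only [Formula.treeSize] at hK
    exact ⟨(hK o le_rfl (by omega)).trans h.1, ih₁ h.2.1 fun x _ _ => hK x (by omega) (by omega),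
      ih₂ h.2.2 fun x _ _ => hK x (by omega) (by omega)⟩
  | dia _ φ ih | box _ φ ih | mu _ φ ih | nu _ φ ih =>
    simp only [Formula.treeSize] at hK
    exact ⟨(hK o le_rfl (by omega)).trans h.1, ih h.2 fun x _ _ => hK x (by omega) (by omega)⟩

theorem occ_code [DecidableEq LVar] (φ : Formula Ag PVar LVar) (β : LVar → ℕ) (o : ℕ) :
    Occ (φ.code β o) φ β o := by
  induction φ generalizing β o with
  | prop | nprop | tt | ff | var => rfl
  | and φ ψ ih₁ ih₂ | or φ ψ ih₁ ih₂ =>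
    refine ⟨by simp [Formula.code], (ih₁ _ _).congr fun x h h' => ?_,
      (ih₂ _ _).congr fun x h h' => ?_⟩
    · rw [Formula.code, if_neg (by omega), if_pos (by omega)]
    · rw [Formula.code, if_neg (by omega), if_neg (by omega)]
  | dia _ φ ih | box _ φ ih | mu _ φ ih | nu _ φ ih =>
    refine ⟨by simp [Formula.code], (ih _ _).congr fun x h h' => ?_⟩
    rw [Formula.code, if_neg (by omega)]

/-- All jump targets are below `e`. -/
def Instr.Below (e : ℕ) : Instr Ag PVar → Prop
  | .goto t => t < e
  | .and l r => l < e ∧ r < e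
  | .or l r => l < e ∧ r < e
  | .dia _ t => t < e
  | .box _ t => t < e
  | .mu t _ => t < e
  | _ => True

theorem Instr.Below.mono {e e' : ℕ} (he : e ≤ e') {k : Instr Ag PVar} (h : k.Below e) :
    k.Below e' := by
  cases k <;> simp only [Instr.Below] at h ⊢ <;> omega

theorem update_binder_lt [DecidableEq LVar] {s : Set LVar} {β : LVar → ℕ} {X : LVar} {o : ℕ}
    (hβ : ∀ Y ∈ s \ {X}, β Y < o) : ∀ Y ∈ s, Function.update β X o Y < o + 1 := by
  intro Y hY
  by_cases h : Y = X
  · subst h; simp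
  · rw [Function.update_of_ne h]
    exact (hβ Y ⟨hY, h⟩).trans (Nat.lt_succ_self o)

theorem Occ.below [DecidableEq LVar] {K : ℕ → Instr Ag PVar} {φ : Formula Ag PVar LVar}
    {β : LVar → ℕ} {o : ℕ} (h : Occ K φ β o) (hβ : ∀ X ∈ φ.freeVars, β X < o) {x : ℕ} (hx : o ≤ x)
    (hx' : x < o + φ.treeSize) : (K x).Below (o + φ.treeSize) := by
  induction φ generalizing β o with
  | prop | nprop | tt | ff =>
    obtain rfl : x = o := by simp only [Formula.treeSize] at hx'; omega
    simp only [Occ] at h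
    rw [h]; trivial
  | var X =>
    obtain rfl : x = o := by simp only [Formula.treeSize] at hx'; omega
    simp only [Occ] at h
    rw [h]
    exact (hβ X rfl).trans (by simp [Formula.treeSize])
  | and φ ψ ih₁ ih₂ | or φ ψ ih₁ ih₂ =>
    simp only [Formula.treeSize] at hx' ⊢
    have h₁ := φ.treeSize_pos
    have h₂ := ψ.treeSize_pos
    rcases Nat.eq_or_lt_of_le hx with rfl | hx
    · rw [h.1]; simp only [Instr.Below]; omega
    · by_cases hm : x < o + 1 + φ.treeSize
      · exact (ih₁ h.2.1 (fun X hX => (hβ X (Or.inl hX)).trans (by omega)) hx hm).mono (by omega)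
      · exact (ih₂ h.2.2 (fun X hX => (hβ X (Or.inr hX)).trans (by omega)) (by omega)
          (by omega)).mono (by omega)
  | dia _ φ ih | box _ φ ih =>
    simp only [Formula.treeSize] at hx' ⊢
    have h₁ := φ.treeSize_pos
    rcases Nat.eq_or_lt_of_le hx with rfl | hx
    · rw [h.1]; simp only [Instr.Below]; omega
    · exact (ih h.2 (fun X hX => (hβ X hX).trans (by omega)) hx (by omega)).mono (by omega)
  | mu X φ ih | nu X φ ih =>
    simp only [Formula.treeSize] at hx' ⊢
    have h₁ := φ.treeSize_pos
    rcases Nat.eq_or_lt_of_le hx with rfl | hx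
    · rw [h.1]; simp only [Instr.Below]; omega
    · exact (ih h.2 (update_binder_lt hβ) hx (by omega)).mono (by omega)

theorem Occ.scope [DecidableEq LVar] {K : ℕ → Instr Ag PVar} {φ : Formula Ag PVar LVar}
    {β : LVar → ℕ} {o : ℕ} (h : Occ K φ β o) {x t e : ℕ} (hx : o ≤ x)
    (hx' : x < o + φ.treeSize) (hK : K x = .mu t e) : x < e ∧ e ≤ o + φ.treeSize := by
  induction φ generalizing β o with
  | prop | nprop | tt | ff | var =>
    obtain rfl : x = o := by simp only [Formula.treeSize] at hx'; omega
    simp only [Occ] at h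
    simp [h] at hK
  | and φ ψ ih₁ ih₂ | or φ ψ ih₁ ih₂ =>
    simp only [Formula.treeSize] at hx' ⊢
    rcases Nat.eq_or_lt_of_le hx with rfl | hx
    · simp [h.1] at hK
    · by_cases hm : x < o + 1 + φ.treeSize
      · have := ih₁ h.2.1 hx hm
        omega
      · have := ih₂ h.2.2 (by omega) (by omega)
        omega
  | dia _ φ ih | box _ φ ih | nu _ φ ih =>
    simp only [Formula.treeSize] at hx' ⊢
    rcases Nat.eq_or_lt_of_le hx with rfl | hx
    · simp [h.1] at hK
    · have := ih h.2 hx (by omega)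
      omega
  | mu X φ ih =>
    simp only [Formula.treeSize] at hx' ⊢
    rcases Nat.eq_or_lt_of_le hx with rfl | hx
    · rw [h.1] at hK
      injection hK with _ hK
      omega
    · have := ih h.2 hx (by omega)
      omega

/-! ### Strategies -/

/-- The active pairs of a state and a position, with choices for disjunctions and diamonds. -/
structure Strat (W : Type) where
  act : W → ℕ → Prop
  c : W → ℕ → Bool
  d : W → ℕ → W

section Strat

variable {W : Type} (K : ℕ → Instr Ag PVar) (L : Ag → Set FrameCond) (R : Ag → W → W → Prop)
  (V : W → Set PVar)

/-- The positions demanded by an active position.  For transitive agents boxes are propagated, for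
reflexive agents they are also unfolded on the spot. -/
def Strat.Step (S : Strat W) (a b : W × ℕ) : Prop :=
  match K a.2 with
  | .goto t => b.1 = a.1 ∧ b.2 = t
  | .mu t _ => b.1 = a.1 ∧ b.2 = t
  | .and l r => b.1 = a.1 ∧ (b.2 = l ∨ b.2 = r)
  | .or l r => b.1 = a.1 ∧ b.2 = if S.c a.1 a.2 then l else r
  | .dia _ t => b.1 = S.d a.1 a.2 ∧ b.2 = t
  | .box i t => (R i a.1 b.1 ∧ (b.2 = t ∨ (.four ∈ L i ∧ b.2 = a.2))) ∨
      (.T ∈ L i ∧ b.1 = a.1 ∧ b.2 = t)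
  | _ => False

/-- Local correctness of an active position. -/
def Strat.Ok (S : Strat W) (w : W) (q : ℕ) : Prop :=
  match K q with
  | .prop p => p ∈ V w
  | .nprop p => p ∉ V w
  | .ff => False
  | .dia i _ => R i w (S.d w q)
  | _ => True

/-- All active positions in `[o, e)` are locally correct and have their demands active. -/
def Strat.Good (S : Strat W) (o e : ℕ) : Prop :=
  ∀ w q, o ≤ q → q < e → S.act w q →
    S.Ok K R V w q ∧ ∀ b, S.Step K L R (w, q) b → S.act b.1 b.2

/-- Steps between active positions inside the scope `[x, e)`. -/
def Strat.ScopeStep (S : Strat W) (x e : ℕ) (a b : W × ℕ) : Prop :=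
  x ≤ a.2 ∧ a.2 < e ∧ x ≤ b.2 ∧ b.2 < e ∧ S.act a.1 a.2 ∧ S.Step K L R a b

/-- Every least fixed point in `[o, e)` is unfolded only finitely often inside its scope. -/
def Strat.MuRanked (S : Strat W) (o e : ℕ) : Prop :=
  ∀ x t e', o ≤ x → x < e → K x = .mu t e' → Ranked (S.ScopeStep K L R x e') fun b => b.2 = x

variable {K L R V}

theorem Strat.Step.lt {S : Strat W} {a b : W × ℕ} (h : S.Step K L R a b) {e : ℕ}
    (hb : (K a.2).Below e) (ha : a.2 < e) : b.2 < e := by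
  unfold Strat.Step at h
  cases hK : K a.2 <;> simp only [hK, Instr.Below] at h hb
  · omega
  · omega
  · rw [h.2]; split_ifs <;> omega
  · omega
  · omega
  · omega

/-- Agreement below `e`. -/
def Strat.Agree (S S' : Strat W) (e : ℕ) : Prop :=
  ∀ w q, q < e → (S'.act w q ↔ S.act w q) ∧ S'.c w q = S.c w q ∧ S'.d w q = S.d w q

theorem Strat.Agree.mono {S S' : Strat W} {e e' : ℕ} (h : S.Agree S' e) (he : e' ≤ e) :
    S.Agree S' e' := fun w q hq => h w q (hq.trans_le he)

theorem Strat.Agree.trans {S S' S'' : Strat W} {e : ℕ} (h : S.Agree S' e) (h' : S'.Agree S'' e) :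
    S.Agree S'' e := fun w q hq =>
  ⟨(h' w q hq).1.trans (h w q hq).1, (h' w q hq).2.1.trans (h w q hq).2.1,
    (h' w q hq).2.2.trans (h w q hq).2.2⟩

theorem Strat.step_congr {S S' : Strat W} {a b : W × ℕ} (hc : S'.c a.1 a.2 = S.c a.1 a.2)
    (hd : S'.d a.1 a.2 = S.d a.1 a.2) : S'.Step K L R a b ↔ S.Step K L R a b := by
  unfold Strat.Step
  rw [hc, hd]

theorem Strat.ok_congr {S S' : Strat W} {w : W} {q : ℕ} (hd : S'.d w q = S.d w q) :
    S'.Ok K R V w q ↔ S.Ok K R V w q := by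
  unfold Strat.Ok
  rw [hd]

theorem Strat.Good.congr {S S' : Strat W} {o e : ℕ} (h : S.Good K L R V o e) (hS : S.Agree S' e)
    (hK : ∀ x, o ≤ x → x < e → (K x).Below e) : S'.Good K L R V o e := by
  intro w q hq hqe hact
  obtain ⟨h₁, h₂⟩ := h w q hq hqe ((hS w q hqe).1.1 hact)
  refine ⟨(Strat.ok_congr (hS w q hqe).2.2).2 h₁, fun b hb => ?_⟩
  have hb' := (Strat.step_congr (S := S) (S' := S') (hS w q hqe).2.1 (hS w q hqe).2.2).1 hb
  exact (hS _ _ (hb'.lt (hK q hq hqe) hqe)).1.2 (h₂ b hb')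

theorem Strat.MuRanked.congr {S S' : Strat W} {o e : ℕ} (h : S.MuRanked K L R o e)
    (hS : S.Agree S' e) (hK : ∀ x t e', o ≤ x → x < e → K x = .mu t e' → e' ≤ e) :
    S'.MuRanked K L R o e := by
  intro x t e' hx hxe hKx
  obtain ⟨r, hr⟩ := h x t e' hx hxe hKx
  refine ⟨r, fun a b ⟨h₁, h₂, h₃, h₄, h₅, h₆⟩ => hr a b ?_⟩
  have := hS a.1 a.2 (h₂.trans_le (hK x t e' hx hxe hKx))
  exact ⟨h₁, h₂, h₃, h₄, this.1.1 h₅, (Strat.step_congr this.2.1 this.2.2).1 h₆⟩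

theorem Strat.Good.append {S : Strat W} {o m e : ℕ} (h : S.Good K L R V o m)
    (h' : S.Good K L R V m e) : S.Good K L R V o e := fun w q h₁ h₂ h₃ =>
  (lt_or_ge q m).elim (fun hq => h w q h₁ hq h₃) fun hq => h' w q hq h₂ h₃

theorem Strat.MuRanked.append {S : Strat W} {o m e : ℕ} (h : S.MuRanked K L R o m)
    (h' : S.MuRanked K L R m e) : S.MuRanked K L R o e := fun x t e' h₁ h₂ h₃ =>
  (lt_or_ge x m).elim (fun hx => h x t e' h₁ hx h₃) fun hx => h' x t e' hx h₂ h₃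

theorem Strat.muRanked_singleton {S : Strat W} {o : ℕ} (h : ∀ t e, K o ≠ .mu t e) :
    S.MuRanked K L R o (o + 1) := by
  intro x t e h₁ h₂ h₃
  obtain rfl : x = o := by omega
  exact absurd h₃ (h t e)

theorem Strat.good_singleton {S : Strat W} {o : ℕ} (h : ∀ w, S.act w o →
    S.Ok K R V w o ∧ ∀ b, S.Step K L R (w, o) b → S.act b.1 b.2) :
    S.Good K L R V o (o + 1) := by
  intro w q h₁ h₂ h₃
  obtain rfl : q = o := by omega
  exact h w h₃

/-- Redefine a strategy at one position. -/
def Strat.set (S : Strat W) (o : ℕ) (A : Set W) (c : W → Bool) (d : W → W) : Strat W where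
  act w q := if q = o then w ∈ A else S.act w q
  c w q := if q = o then c w else S.c w q
  d w q := if q = o then d w else S.d w q

theorem Strat.agree_set (S : Strat W) (o : ℕ) (A : Set W) (c : W → Bool) (d : W → W) :
    S.Agree (S.set o A c d) o := by
  intro w q hq
  simp [Strat.set, hq.ne]

end Strat

/-! ### Semantics -/

theorem update_subset_update [DecidableEq LVar] {W : Type} {ρ ρ' : LVar → Set W}
    (h : ∀ X, ρ X ⊆ ρ' X) (Y : LVar) (S : Set W) (X : LVar) :
    Function.update ρ Y S X ⊆ Function.update ρ' Y S X := by
  by_cases hX : X = Y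
  · subst hX; simp
  · simpa [hX] using h X

theorem Formula.sem_mono [DecidableEq LVar] (M : KModel Ag PVar) (φ : Formula Ag PVar LVar)
    {ρ ρ' : LVar → Set M.W} (h : ∀ X, ρ X ⊆ ρ' X) : φ.sem M ρ ⊆ φ.sem M ρ' := by
  induction φ generalizing ρ ρ' with
  | prop | nprop | tt | ff => exact le_rfl
  | var X => exact h X
  | and φ ψ ih₁ ih₂ => exact Set.inter_subset_inter (ih₁ h) (ih₂ h)
  | or φ ψ ih₁ ih₂ => exact Set.union_subset_union (ih₁ h) (ih₂ h)
  | dia a φ ih =>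
    rintro w ⟨t, ht, ht'⟩
    exact ⟨t, ht, ih h ht'⟩
  | box a φ ih => exact fun w hw t ht => ih h (hw t ht)
  | mu Y φ ih => exact fun w hw S hS => hw S ((ih (update_subset_update h Y S)).trans hS)
  | nu Y φ ih =>
    rintro w ⟨S, hS, hw⟩
    exact ⟨S, Set.Subset.trans hS (ih (update_subset_update h Y S)), hw⟩

theorem Formula.sem_update_mono [DecidableEq LVar] (M : KModel Ag PVar) (φ : Formula Ag PVar LVar)
    (ρ : LVar → Set M.W) (X : LVar) : Monotone fun S : Set M.W => φ.sem M (Function.update ρ X S) := by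
  intro S S' h
  refine φ.sem_mono M (ρ := Function.update ρ X S) (ρ' := Function.update ρ X S') fun Y => ?_
  rcases eq_or_ne Y X with rfl | hY
  · rw [Function.update_self, Function.update_self]
    exact h
  · rw [Function.update_of_ne hY, Function.update_of_ne hY]

theorem exists_approximant_rank {W : Type} {F : Set W → Set W} (hF : Monotone F) :
    ∃ a : W → Ordinal.{0}, ∀ w ∈ ⋂₀ {S | F S ⊆ S},
      w ∈ F {v | v ∈ ⋂₀ {S | F S ⊆ S} ∧ a v < a w} := by
  classical
  let f : Set W →o Set W := ⟨F, hF⟩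
  have hT : ⋂₀ {S | F S ⊆ S} = f.lfp := rfl
  obtain ⟨c, hc⟩ := OrdinalApprox.lfp_mem_range_lfpApprox f
  have hmem : ∀ w ∈ f.lfp, ∃ b, w ∈ OrdinalApprox.lfpApprox f ⊥ b := fun w hw => ⟨c, hc ▸ hw⟩
  let a : W → Ordinal.{0} := fun w => sInf {b | w ∈ OrdinalApprox.lfpApprox f ⊥ b}
  refine ⟨a, fun w hw => ?_⟩
  rw [hT] at hw ⊢
  have h₁ : w ∈ OrdinalApprox.lfpApprox f ⊥ (a w) := csInf_mem (hmem w hw)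
  rw [OrdinalApprox.lfpApprox] at h₁
  rcases h₁ with h₁ | h₁
  · exact h₁.elim
  · simp only [Set.iSup_eq_iUnion, Set.mem_iUnion, exists_prop] at h₁
    obtain ⟨b, hb, hwb⟩ := h₁
    refine hF ?_ hwb
    intro v hv
    refine ⟨?_, (csInf_le' (s := {b | v ∈ OrdinalApprox.lfpApprox f ⊥ b}) hv).trans_lt hb⟩
    exact OrdinalApprox.lfpApprox_le_of_mem_fixedPoints f f.isFixedPt_lfp bot_le b hv

/-! ### Strategies from models -/

theorem Formula.update_binder_act [DecidableEq LVar] {W : Type} {s : Set LVar} {β : LVar → ℕ}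
    {ρ : LVar → Set W} {X : LVar} {o : ℕ} {act : W → ℕ → Prop} {A : Set W}
    (hρ : ∀ Y ∈ s \ {X}, ∀ w ∈ ρ Y, act w (β Y)) (hA : ∀ w ∈ A, act w o) :
    ∀ Y ∈ s, ∀ w ∈ Function.update ρ X A Y, act w (Function.update β X o Y) := by
  intro Y hY w hw
  rcases eq_or_ne Y X with rfl | h
  · rw [Function.update_self] at hw ⊢
    exact hA w hw
  · rw [Function.update_of_ne h] at hw ⊢
    exact hρ Y ⟨hY, h⟩ w hw

section Combine

variable {W : Type} {K : ℕ → Instr Ag PVar} {L : Ag → Set FrameCond} {R : Ag → W → W → Prop}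
  {V : W → Set PVar}

theorem Strat.exists_atom (S₀ : Strat W) {o : ℕ} {A : Set W} (hK : ∀ t e, K o ≠ .mu t e)
    (hA : ∀ w ∈ A, S₀.Ok K R V w o ∧
      ∀ b, S₀.Step K L R (w, o) b → b.2 < o ∧ S₀.act b.1 b.2) :
    ∃ S : Strat W, S₀.Agree S o ∧ (∀ w ∈ A, S.act w o) ∧ S.Good K L R V o (o + 1) ∧
      S.MuRanked K L R o (o + 1) := by
  refine ⟨S₀.set o A (S₀.c · o) (S₀.d · o), S₀.agree_set _ _ _ _, fun w hw => ?_,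
    Strat.good_singleton fun w hw => ?_, Strat.muRanked_singleton hK⟩
  · simpa [Strat.set] using hw
  · obtain ⟨h₁, h₂⟩ := hA w (by simpa [Strat.set] using hw)
    refine ⟨(Strat.ok_congr (by simp [Strat.set])).2 h₁, fun b hb => ?_⟩
    obtain ⟨h₃, h₄⟩ := h₂ b ((Strat.step_congr (by simp [Strat.set]) (by simp [Strat.set])).1 hb)
    exact ((S₀.agree_set o _ _ _) _ _ h₃).1.2 h₄

/-- Strategies for the approximants of a least fixed point combine to one for the fixed point
itself. -/
theorem Strat.exists_combine {o e : ℕ} (hK : K o = .mu (o + 1) e) (S₀ : Strat W)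
    {T : Set W} {a : W → Ordinal.{0}} (S : Ordinal.{0} → Strat W)
    (hS₀ : ∀ α, S₀.Agree (S α) o) (hSo : ∀ α w, (S α).act w o ↔ w ∈ T ∧ a w < α)
    (hbody : ∀ w ∈ T, (S (a w)).act w (o + 1)) (hgood : ∀ α, (S α).Good K L R V (o + 1) e)
    (hmu : ∀ α, (S α).MuRanked K L R (o + 1) e)
    (hscope : ∀ x t e', o + 1 ≤ x → x < e → K x = .mu t e' → e' ≤ e) :
    ∃ S' : Strat W, S₀.Agree S' o ∧ (∀ w ∈ T, S'.act w o) ∧ S'.Good K L R V o e ∧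
      S'.MuRanked K L R o e := by
  classical
  let α : W → ℕ → Ordinal.{0} := fun w q =>
    if q = o then a w else sInf {α | (S α).act w q}
  let S' : Strat W :=
    { act := fun w q => if q < o then S₀.act w q else if q = o then w ∈ T else
        (S (α w q)).act w q
      c := fun w q => if q < o then S₀.c w q else (S (α w q)).c w q
      d := fun w q => if q < o then S₀.d w q else (S (α w q)).d w q }
  have hlow : ∀ w q, q < o → (S'.act w q ↔ S₀.act w q) := fun w q h => by simp [S', h]
  have hat : ∀ w, S'.act w o ↔ w ∈ T := fun w => by simp [S']
  have hhigh : ∀ w q, o < q → (S'.act w q ↔ (S (α w q)).act w q) := fun w q h => by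
    simp [S', h.ne', not_lt.2 h.le]
  have hmin : ∀ w q γ, o < q → (S γ).act w q → α w q ≤ γ ∧ S'.act w q := by
    intro w q γ hq h
    have hα : α w q = sInf {α | (S α).act w q} := by simp [α, hq.ne']
    refine ⟨hα ▸ csInf_le' (s := {α | (S α).act w q}) h, (hhigh w q hq).2 ?_⟩
    rw [hα]
    exact csInf_mem (s := {α | (S α).act w q}) ⟨γ, h⟩
  have hstep : ∀ w q b, o < q → (S'.Step K L R (w, q) b ↔ (S (α w q)).Step K L R (w, q) b) := by
    intro w q b hq
    exact Strat.step_congr (by simp [S', not_lt.2 hq.le]) (by simp [S', not_lt.2 hq.le])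
  have hnext : ∀ w q b, o < q → q < e → S'.act w q → S'.Step K L R (w, q) b →
      S'.act b.1 b.2 ∧ (o < b.2 → (S (α w q)).act b.1 b.2) ∧
      (b.2 = o → α b.1 b.2 < α w q) ∧ (o < b.2 → α b.1 b.2 ≤ α w q) := by
    intro w q b hq hqe hact hb
    have hb' := ((hgood (α w q)) w q hq hqe ((hhigh w q hq).1 hact)).2 b ((hstep w q b hq).1 hb)
    rcases lt_trichotomy b.2 o with h | h | h
    · exact ⟨(hlow _ _ h).2 ((hS₀ _ _ _ h).1.1 hb'), fun h' => absurd h (by omega),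
        fun h' => absurd h (by omega), fun h' => absurd h (by omega)⟩
    · have hb'' := hb'
      rw [h, hSo] at hb''
      refine ⟨?_, fun h' => absurd h (by omega), fun _ => ?_, fun h' => absurd h (by omega)⟩
      · rw [h, hat]; exact hb''.1
      · simpa [α, h] using hb''.2
    · have := hmin _ _ _ h hb'
      exact ⟨this.2, fun _ => hb', fun h' => absurd h (by omega), fun _ => this.1⟩
  have hfirst : ∀ w b, S'.Step K L R (w, o) b → b.1 = w ∧ b.2 = o + 1 := by
    intro w b hb
    simpa [Strat.Step, hK] using hb
  refine ⟨S', fun w q hq => ⟨hlow w q hq, by simp [S', hq], by simp [S', hq]⟩,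
    fun w hw => (hat w).2 hw, fun w q hq hqe hact => ?_, fun x t e' hx hxe hKx => ?_⟩
  · rcases Nat.eq_or_lt_of_le hq with rfl | hq
    · refine ⟨by simp [Strat.Ok, hK], fun b hb => ?_⟩
      obtain ⟨h₁, h₂⟩ := hfirst w b hb
      rw [h₁, h₂]
      exact (hmin _ _ _ (by omega) (hbody w ((hat w).1 hact))).2
    · refine ⟨?_, fun b hb => (hnext w q b hq hqe hact hb).1⟩
      exact (Strat.ok_congr (by simp [S', not_lt.2 hq.le])).2
        ((hgood (α w q)) w q hq hqe ((hhigh w q hq).1 hact)).1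
  · rcases Nat.eq_or_lt_of_le hx with rfl | hx
    · refine ⟨fun b => α b.1 b.2, ?_⟩
      rintro ⟨w, q⟩ b ⟨h₁, h₂, h₃, -, h₅, h₆⟩
      have he' : e' = e := by rw [hK] at hKx; injection hKx with _ h; exact h.symm
      dsimp only at h₁ h₂ h₃ h₅
      rw [he'] at h₂
      rcases Nat.eq_or_lt_of_le h₁ with rfl | h₁
      · obtain ⟨h₇, h₈⟩ := hfirst w b h₆
        have hle := (hmin _ _ _ (by omega) (hbody w ((hat w).1 h₅))).1
        refine ⟨?_, fun h => absurd h (by omega)⟩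
        beta_reduce
        rw [h₇, h₈]
        simpa [α] using hle
      · obtain ⟨-, -, h₇, h₈⟩ := hnext w q b h₁ h₂ h₅ h₆
        rcases Nat.eq_or_lt_of_le h₃ with h | h
        · exact ⟨(h₇ h.symm).le, h₇⟩
        · exact ⟨h₈ h, fun h' => absurd h (by omega)⟩
    · choose r hr using fun γ => hmu γ x t e' hx hxe hKx
      have hsc := hscope x t e' hx hxe hKx
      apply ranked_of_rank (fun b => toLex (α b.1 b.2, r (α b.1 b.2) b))
      rintro ⟨w, q⟩ b ⟨h₁, h₂, h₃, h₄, h₅, h₆⟩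
      dsimp only at h₁ h₂ h₃ h₅
      have hoq : o < q := by omega
      obtain ⟨-, h₇, -, h₈⟩ := hnext w q b hoq (by omega) h₅ h₆
      have h₉ := hr (α w q) (w, q) b
        ⟨h₁, h₂, h₃, h₄, (hhigh w q hoq).1 h₅, (hstep w q b hoq).1 h₆⟩
      rcases (h₈ (by omega)).lt_or_eq with h | h
      · exact ⟨le_of_lt (Prod.Lex.toLex_lt_toLex.2 (Or.inl h)),
          fun _ => Prod.Lex.toLex_lt_toLex.2 (Or.inl h)⟩
      · rw [h]
        exact ⟨Prod.Lex.toLex_le_toLex.2 (Or.inr ⟨rfl, h₉.1⟩),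
          fun hP => Prod.Lex.toLex_lt_toLex.2 (Or.inr ⟨rfl, h₉.2 hP⟩)⟩

end Combine

theorem Formula.exists_strat [DecidableEq LVar] {L : Ag → Set FrameCond} {M : KModel Ag PVar}
    (hM : IsLModel L M) {K : ℕ → Instr Ag PVar} (φ : Formula Ag PVar LVar) :
    ∀ (β : LVar → ℕ) (o : ℕ) (ρ : LVar → Set M.W) (S₀ : Strat M.W), Occ K φ β o →
      (∀ X ∈ φ.freeVars, β X < o) → (∀ X ∈ φ.freeVars, ∀ w ∈ ρ X, S₀.act w (β X)) →
      ∃ S : Strat M.W, S₀.Agree S o ∧ (∀ w ∈ φ.sem M ρ, S.act w o) ∧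
        S.Good K L M.R M.V o (o + φ.treeSize) ∧ S.MuRanked K L M.R o (o + φ.treeSize) := by
  classical
  induction φ with
  | prop p | nprop p =>
    intro β o ρ S₀ hocc _ _
    simp only [Occ] at hocc
    refine S₀.exists_atom (by simp [hocc]) fun w hw => ?_
    simpa [Strat.Ok, Strat.Step, hocc, Formula.sem] using hw
  | tt =>
    intro β o ρ S₀ hocc _ _
    simp only [Occ] at hocc
    exact S₀.exists_atom (by simp [hocc]) fun w _ => by simp [Strat.Ok, Strat.Step, hocc]
  | ff =>
    intro β o ρ S₀ hocc _ _
    simp only [Occ] at hocc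
    exact S₀.exists_atom (by simp [hocc]) fun w hw => hw.elim
  | var X =>
    intro β o ρ S₀ hocc hβ hρ
    simp only [Occ] at hocc
    refine S₀.exists_atom (by simp [hocc]) fun w hw => ⟨by simp [Strat.Ok, hocc], fun b hb => ?_⟩
    simp only [Strat.Step, hocc] at hb
    rw [hb.1, hb.2]
    exact ⟨hβ X rfl, hρ X rfl w hw⟩
  | and φ ψ ih₁ ih₂ =>
    intro β o ρ S₀ hocc hβ hρ
    obtain ⟨hK, hocc₁, hocc₂⟩ := hocc
    have hβ₁ : ∀ X ∈ φ.freeVars, β X < o := fun X hX => hβ X (Or.inl hX)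
    have hβ₂ : ∀ X ∈ ψ.freeVars, β X < o := fun X hX => hβ X (Or.inr hX)
    let S₁ := S₀.set o ((φ.and ψ).sem M ρ) (S₀.c · o) (S₀.d · o)
    have hS₁ : S₀.Agree S₁ o := S₀.agree_set _ _ _ _
    obtain ⟨S₂, hag₂, hact₂, hgood₂, hmu₂⟩ := ih₁ β (o + 1) ρ S₁ hocc₁
      (fun X hX => (hβ₁ X hX).trans (by omega))
      (fun X hX w hw => (hS₁ _ _ (hβ₁ X hX)).1.2 (hρ X (Or.inl hX) w hw))
    have hS₂ : S₀.Agree S₂ o := hS₁.trans (hag₂.mono (by omega))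
    obtain ⟨S₃, hag₃, hact₃, hgood₃, hmu₃⟩ := ih₂ β (o + 1 + φ.treeSize) ρ S₂ hocc₂
      (fun X hX => (hβ₂ X hX).trans (by omega))
      (fun X hX w hw => (hS₂ _ _ (hβ₂ X hX)).1.2 (hρ X (Or.inr hX) w hw))
    have hS₃ : S₀.Agree S₃ o := hS₂.trans (hag₃.mono (by omega))
    have hS₁₃ : S₁.Agree S₃ (o + 1) := hag₂.trans (hag₃.mono (by omega))
    have hact : ∀ w, S₃.act w o ↔ w ∈ (φ.and ψ).sem M ρ := fun w =>
      (hS₁₃ w o (by omega)).1.trans (by simp [S₁, Strat.set])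
    have hpos := φ.treeSize_pos
    have hsize : o + (φ.and ψ).treeSize = o + 1 + φ.treeSize + ψ.treeSize := by
      simp only [Formula.treeSize]; omega
    rw [hsize]
    refine ⟨S₃, hS₃, fun w hw => (hact w).2 hw, Strat.Good.append (Strat.good_singleton ?_)
      (Strat.Good.append (hgood₂.congr hag₃ ?_) hgood₃),
      Strat.MuRanked.append (Strat.muRanked_singleton (by simp [hK]))
      (Strat.MuRanked.append (hmu₂.congr hag₃ ?_) hmu₃)⟩
    · intro w hw
      rw [hact] at hw
      refine ⟨by simp [Strat.Ok, hK], fun b hb => ?_⟩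
      simp only [Strat.Step, hK] at hb
      obtain ⟨hb₁, hb₂ | hb₂⟩ := hb <;> rw [hb₁, hb₂]
      · exact (hag₃ _ _ (by omega)).1.2 (hact₂ w hw.1)
      · exact hact₃ w hw.2
    · exact fun x hx hx' => hocc₁.below (fun X hX => (hβ₁ X hX).trans (by omega)) hx hx'
    · exact fun x t e' hx hx' h => (hocc₁.scope hx hx' h).2
  | or φ ψ ih₁ ih₂ =>
    intro β o ρ S₀ hocc hβ hρ
    obtain ⟨hK, hocc₁, hocc₂⟩ := hocc
    have hβ₁ : ∀ X ∈ φ.freeVars, β X < o := fun X hX => hβ X (Or.inl hX)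
    have hβ₂ : ∀ X ∈ ψ.freeVars, β X < o := fun X hX => hβ X (Or.inr hX)
    let S₁ := S₀.set o ((φ.or ψ).sem M ρ) (fun w => decide (w ∈ φ.sem M ρ)) (S₀.d · o)
    have hS₁ : S₀.Agree S₁ o := S₀.agree_set _ _ _ _
    obtain ⟨S₂, hag₂, hact₂, hgood₂, hmu₂⟩ := ih₁ β (o + 1) ρ S₁ hocc₁
      (fun X hX => (hβ₁ X hX).trans (by omega))
      (fun X hX w hw => (hS₁ _ _ (hβ₁ X hX)).1.2 (hρ X (Or.inl hX) w hw))
    have hS₂ : S₀.Agree S₂ o := hS₁.trans (hag₂.mono (by omega))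
    obtain ⟨S₃, hag₃, hact₃, hgood₃, hmu₃⟩ := ih₂ β (o + 1 + φ.treeSize) ρ S₂ hocc₂
      (fun X hX => (hβ₂ X hX).trans (by omega))
      (fun X hX w hw => (hS₂ _ _ (hβ₂ X hX)).1.2 (hρ X (Or.inr hX) w hw))
    have hS₃ : S₀.Agree S₃ o := hS₂.trans (hag₃.mono (by omega))
    have hS₁₃ : S₁.Agree S₃ (o + 1) := hag₂.trans (hag₃.mono (by omega))
    have hact : ∀ w, S₃.act w o ↔ w ∈ (φ.or ψ).sem M ρ := fun w =>
      (hS₁₃ w o (by omega)).1.trans (by simp [S₁, Strat.set])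
    have hc : ∀ w, S₃.c w o = decide (w ∈ φ.sem M ρ) := fun w =>
      (hS₁₃ w o (by omega)).2.1.trans (by simp [S₁, Strat.set])
    have hpos := φ.treeSize_pos
    have hsize : o + (φ.or ψ).treeSize = o + 1 + φ.treeSize + ψ.treeSize := by
      simp only [Formula.treeSize]; omega
    rw [hsize]
    refine ⟨S₃, hS₃, fun w hw => (hact w).2 hw, Strat.Good.append (Strat.good_singleton ?_)
      (Strat.Good.append (hgood₂.congr hag₃ ?_) hgood₃),
      Strat.MuRanked.append (Strat.muRanked_singleton (by simp [hK]))
      (Strat.MuRanked.append (hmu₂.congr hag₃ ?_) hmu₃)⟩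
    · intro w hw
      rw [hact] at hw
      refine ⟨by simp [Strat.Ok, hK], fun b hb => ?_⟩
      simp only [Strat.Step, hK, hc, decide_eq_true_eq] at hb
      obtain ⟨hb₁, hb₂⟩ := hb
      by_cases hwφ : w ∈ φ.sem M ρ
      · rw [if_pos hwφ] at hb₂
        rw [hb₁, hb₂]
        exact (hag₃ _ _ (by omega)).1.2 (hact₂ w hwφ)
      · rw [if_neg hwφ] at hb₂
        rw [hb₁, hb₂]
        exact hact₃ w (hw.resolve_left hwφ)
    · exact fun x hx hx' => hocc₁.below (fun X hX => (hβ₁ X hX).trans (by omega)) hx hx'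
    · exact fun x t e' hx hx' h => (hocc₁.scope hx hx' h).2
  | dia a φ ih =>
    intro β o ρ S₀ hocc hβ hρ
    obtain ⟨hK, hocc₁⟩ := hocc
    have hex : ∀ w, ∃ v, w ∈ (φ.dia a).sem M ρ → M.R a w v ∧ v ∈ φ.sem M ρ := by
      intro w
      by_cases hw : w ∈ (φ.dia a).sem M ρ
      · obtain ⟨v, hv⟩ := hw
        exact ⟨v, fun _ => hv⟩
      · exact ⟨w, fun h => absurd h hw⟩
    choose D hD using hex
    let S₁ := S₀.set o ((φ.dia a).sem M ρ) (S₀.c · o) D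
    have hS₁ : S₀.Agree S₁ o := S₀.agree_set _ _ _ _
    obtain ⟨S₂, hag₂, hact₂, hgood₂, hmu₂⟩ := ih β (o + 1) ρ S₁ hocc₁
      (fun X hX => (hβ X hX).trans (by omega))
      (fun X hX w hw => (hS₁ _ _ (hβ X hX)).1.2 (hρ X hX w hw))
    have hact : ∀ w, S₂.act w o ↔ w ∈ (φ.dia a).sem M ρ := fun w =>
      (hag₂ w o (by omega)).1.trans (by simp [S₁, Strat.set])
    have hd : ∀ w, S₂.d w o = D w := fun w =>
      (hag₂ w o (by omega)).2.2.trans (by simp [S₁, Strat.set])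
    have hsize : o + (φ.dia a).treeSize = o + 1 + φ.treeSize := by
      simp only [Formula.treeSize]; omega
    rw [hsize]
    refine ⟨S₂, hS₁.trans (hag₂.mono (by omega)), fun w hw => (hact w).2 hw,
      Strat.Good.append (Strat.good_singleton fun w hw => ?_) hgood₂,
      Strat.MuRanked.append (Strat.muRanked_singleton (by simp [hK])) hmu₂⟩
    rw [hact] at hw
    refine ⟨by simpa [Strat.Ok, hK, hd] using (hD w hw).1, fun b hb => ?_⟩
    simp only [Strat.Step, hK, hd] at hb
    rw [hb.1, hb.2]
    exact hact₂ _ (hD w hw).2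
  | box a φ ih =>
    intro β o ρ S₀ hocc hβ hρ
    obtain ⟨hK, hocc₁⟩ := hocc
    let S₁ := S₀.set o ((φ.box a).sem M ρ) (S₀.c · o) (S₀.d · o)
    have hS₁ : S₀.Agree S₁ o := S₀.agree_set _ _ _ _
    obtain ⟨S₂, hag₂, hact₂, hgood₂, hmu₂⟩ := ih β (o + 1) ρ S₁ hocc₁
      (fun X hX => (hβ X hX).trans (by omega))
      (fun X hX w hw => (hS₁ _ _ (hβ X hX)).1.2 (hρ X hX w hw))
    have hact : ∀ w, S₂.act w o ↔ w ∈ (φ.box a).sem M ρ := fun w =>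
      (hag₂ w o (by omega)).1.trans (by simp [S₁, Strat.set])
    have hsize : o + (φ.box a).treeSize = o + 1 + φ.treeSize := by
      simp only [Formula.treeSize]; omega
    rw [hsize]
    refine ⟨S₂, hS₁.trans (hag₂.mono (by omega)), fun w hw => (hact w).2 hw,
      Strat.Good.append (Strat.good_singleton fun w hw => ?_) hgood₂,
      Strat.MuRanked.append (Strat.muRanked_singleton (by simp [hK])) hmu₂⟩
    rw [hact] at hw
    refine ⟨by simp [Strat.Ok, hK], fun b hb => ?_⟩
    simp only [Strat.Step, hK] at hb
    rcases hb with ⟨hR, hb | ⟨h4, hb⟩⟩ | ⟨hT, hb₁, hb₂⟩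
    · rw [hb]
      exact hact₂ _ (hw _ hR)
    · rw [hb, hact]
      exact fun v hv => hw v (hM a _ h4 _ _ _ hR hv)
    · rw [hb₁, hb₂]
      exact hact₂ _ (hw _ (hM a _ hT w))
  | mu X φ ih =>
    intro β o ρ S₀ hocc hβ hρ
    obtain ⟨hK, hocc₁⟩ := hocc
    obtain ⟨a, ha⟩ := exists_approximant_rank (φ.sem_update_mono M ρ X)
    have hsize : o + (φ.mu X).treeSize = o + 1 + φ.treeSize := by
      simp only [Formula.treeSize]; omega
    rw [hsize]
    let A : Ordinal.{0} → Set M.W := fun α => {v | v ∈ (φ.mu X).sem M ρ ∧ a v < α}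
    have hfam : ∀ α, ∃ S : Strat M.W, S₀.Agree S o ∧ (∀ w, S.act w o ↔ w ∈ A α) ∧
        (∀ w ∈ φ.sem M (Function.update ρ X (A α)), S.act w (o + 1)) ∧
        S.Good K L M.R M.V (o + 1) (o + 1 + φ.treeSize) ∧
        S.MuRanked K L M.R (o + 1) (o + 1 + φ.treeSize) := by
      intro α
      let S₁ := S₀.set o (A α) (S₀.c · o) (S₀.d · o)
      have hS₁ : S₀.Agree S₁ o := S₀.agree_set _ _ _ _
      obtain ⟨S₂, hag₂, hact₂, hgood₂, hmu₂⟩ := ih (Function.update β X o) (o + 1)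
        (Function.update ρ X (A α)) S₁ hocc₁ (update_binder_lt hβ)
        (Formula.update_binder_act (fun Y hY w hw => (hS₁ _ _ (hβ Y hY)).1.2 (hρ Y hY w hw))
          fun w hw => by simpa [S₁, Strat.set] using hw)
      exact ⟨S₂, hS₁.trans (hag₂.mono (by omega)), fun w =>
        (hag₂ w o (by omega)).1.trans (by simp [S₁, Strat.set]), hact₂, hgood₂, hmu₂⟩
    choose S h₁ h₂ h₃ h₄ h₅ using hfam
    exact Strat.exists_combine hK S₀ S h₁ h₂ (fun w hw => h₃ _ w (ha w hw)) h₄ h₅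
      (fun x t e' hx hx' h => (hocc₁.scope hx hx' h).2)
  | nu X φ ih =>
    intro β o ρ S₀ hocc hβ hρ
    obtain ⟨hK, hocc₁⟩ := hocc
    let A := (φ.nu X).sem M ρ
    have hA : A ⊆ φ.sem M (Function.update ρ X A) := by
      rintro w ⟨B, hB, hw⟩
      exact φ.sem_update_mono M ρ X (Set.subset_sUnion_of_mem hB) (hB hw)
    let S₁ := S₀.set o A (S₀.c · o) (S₀.d · o)
    have hS₁ : S₀.Agree S₁ o := S₀.agree_set _ _ _ _
    obtain ⟨S₂, hag₂, hact₂, hgood₂, hmu₂⟩ := ih (Function.update β X o) (o + 1)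
      (Function.update ρ X A) S₁ hocc₁ (update_binder_lt hβ)
      (Formula.update_binder_act (fun Y hY w hw => (hS₁ _ _ (hβ Y hY)).1.2 (hρ Y hY w hw))
        fun w hw => by simpa [S₁, Strat.set] using hw)
    have hact : ∀ w, S₂.act w o ↔ w ∈ A := fun w =>
      (hag₂ w o (by omega)).1.trans (by simp [S₁, Strat.set])
    have hsize : o + (φ.nu X).treeSize = o + 1 + φ.treeSize := by
      simp only [Formula.treeSize]; omega
    rw [hsize]
    refine ⟨S₂, hS₁.trans (hag₂.mono (by omega)), fun w hw => (hact w).2 hw,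
      Strat.Good.append (Strat.good_singleton fun w hw => ?_) hgood₂,
      Strat.MuRanked.append (Strat.muRanked_singleton (by simp [hK])) hmu₂⟩
    rw [hact] at hw
    refine ⟨by simp [Strat.Ok, hK], fun b hb => ?_⟩
    simp only [Strat.Step, hK] at hb
    rw [hb.1, hb.2]
    exact hact₂ _ (hA hw)

/-! ### Models from strategies -/

section Sound

variable {W : Type}

/-- Close a family of relations under the reflexivity and transitivity conditions of a logic. -/
def frameClosure (L : Ag → Set FrameCond) (R : Ag → W → W → Prop) (i : Ag) (w v : W) : Prop :=
  (.T ∈ L i ∧ w = v) ∨ R i w v ∨ (.four ∈ L i ∧ Relation.TransGen (R i) w v)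

theorem isLModel_frameClosure {L : Ag → Set FrameCond}
    (hL : ∀ i, L i ⊆ {FrameCond.D, FrameCond.T, FrameCond.four}) (hne : Nonempty W)
    {R : Ag → W → W → Prop} (hD : ∀ i, .D ∈ L i → ∀ w, ∃ v, R i w v) (V : W → Set PVar) :
    IsLModel L ⟨W, hne, frameClosure L R, V⟩ := by
  intro i c hc
  rcases hL i hc with rfl | rfl | rfl
  · intro w
    obtain ⟨v, hv⟩ := hD i hc w
    exact ⟨v, Or.inr (Or.inl hv)⟩
  · exact fun w => Or.inl ⟨hc, rfl⟩
  · have htrans : ∀ w v, frameClosure L R i w v → w = v ∨ Relation.TransGen (R i) w v := by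
      rintro w v (⟨-, h⟩ | h | ⟨-, h⟩)
      · exact Or.inl h
      · exact Or.inr (.single h)
      · exact Or.inr h
    intro w v u hwv hvu
    rcases htrans _ _ hwv with h | h
    · subst h; exact hvu
    · rcases htrans _ _ hvu with h' | h'
      · subst h'; exact hwv
      · exact Or.inr (Or.inr ⟨hc, h.trans h'⟩)

theorem Formula.mem_sem_of_strat [DecidableEq LVar] {L : Ag → Set FrameCond}
    {K : ℕ → Instr Ag PVar} {hne : Nonempty W} {R : Ag → W → W → Prop} {V : W → Set PVar}
    (φ : Formula Ag PVar LVar) :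
    ∀ (β : LVar → ℕ) (o : ℕ) (ρ : LVar → Set W) (S : Strat W), Occ K φ β o →
      (∀ X ∈ φ.freeVars, β X < o) → (∀ X ∈ φ.freeVars, ∀ w, S.act w (β X) → w ∈ ρ X) →
      S.Good K L R V o (o + φ.treeSize) → S.MuRanked K L R o (o + φ.treeSize) →
      ∀ w, S.act w o → w ∈ φ.sem ⟨W, hne, frameClosure L R, V⟩ ρ := by
  induction φ with
  | prop p | nprop p | ff =>
    intro β o ρ S hocc _ _ hgood _ w hw
    simp only [Occ] at hocc
    simpa [Strat.Ok, hocc, Formula.sem] using (hgood w o le_rfl (by simp [Formula.treeSize]) hw).1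
  | tt => exact fun _ _ _ _ _ _ _ _ _ _ _ => trivial
  | var X =>
    intro β o ρ S hocc _ hρ hgood _ w hw
    simp only [Occ] at hocc
    refine hρ X rfl w ((hgood w o le_rfl (by simp [Formula.treeSize]) hw).2 (w, β X) ?_)
    simp [Strat.Step, hocc]
  | and φ ψ ih₁ ih₂ =>
    intro β o ρ S hocc hβ hρ hgood hmu w hw
    obtain ⟨hK, hocc₁, hocc₂⟩ := hocc
    simp only [Formula.treeSize] at hgood hmu
    have hstep := (hgood w o le_rfl (by omega) hw).2
    refine ⟨ih₁ β (o + 1) ρ S hocc₁ (fun X hX => (hβ X (Or.inl hX)).trans (by omega))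
      (fun X hX => hρ X (Or.inl hX)) (fun v q h h' => hgood v q (by omega) (by omega))
      (fun x t e h h' => hmu x t e (by omega) (by omega)) w (hstep (w, o + 1) ?_),
      ih₂ β (o + 1 + φ.treeSize) ρ S hocc₂ (fun X hX => (hβ X (Or.inr hX)).trans (by omega))
      (fun X hX => hρ X (Or.inr hX)) (fun v q h h' => hgood v q (by omega) (by omega))
      (fun x t e h h' => hmu x t e (by omega) (by omega)) w
      (hstep (w, o + 1 + φ.treeSize) ?_)⟩
    · simp [Strat.Step, hK]
    · simp [Strat.Step, hK]
  | or φ ψ ih₁ ih₂ =>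
    intro β o ρ S hocc hβ hρ hgood hmu w hw
    obtain ⟨hK, hocc₁, hocc₂⟩ := hocc
    simp only [Formula.treeSize] at hgood hmu
    have hstep := (hgood w o le_rfl (by omega) hw).2
    by_cases hc : S.c w o = true
    · refine Or.inl (ih₁ β (o + 1) ρ S hocc₁ (fun X hX => (hβ X (Or.inl hX)).trans (by omega))
        (fun X hX => hρ X (Or.inl hX)) (fun v q h h' => hgood v q (by omega) (by omega))
        (fun x t e h h' => hmu x t e (by omega) (by omega)) w (hstep (w, o + 1) ?_))
      simp [Strat.Step, hK, hc]
    · refine Or.inr (ih₂ β (o + 1 + φ.treeSize) ρ S hocc₂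
        (fun X hX => (hβ X (Or.inr hX)).trans (by omega))
        (fun X hX => hρ X (Or.inr hX)) (fun v q h h' => hgood v q (by omega) (by omega))
        (fun x t e h h' => hmu x t e (by omega) (by omega)) w
        (hstep (w, o + 1 + φ.treeSize) ?_))
      simp [Strat.Step, hK, hc]
  | dia i φ ih =>
    intro β o ρ S hocc hβ hρ hgood hmu w hw
    obtain ⟨hK, hocc₁⟩ := hocc
    simp only [Formula.treeSize] at hgood hmu
    obtain ⟨hok, hstep⟩ := hgood w o le_rfl (by omega) hw
    refine ⟨S.d w o, Or.inr (Or.inl (by simpa [Strat.Ok, hK] using hok)),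
      ih β (o + 1) ρ S hocc₁ (fun X hX => (hβ X hX).trans (by omega)) hρ
      (fun v q h h' => hgood v q (by omega) (by omega))
      (fun x t e h h' => hmu x t e (by omega) (by omega)) _ (hstep (S.d w o, o + 1) ?_)⟩
    simp [Strat.Step, hK]
  | box i φ ih =>
    intro β o ρ S hocc hβ hρ hgood hmu w hw v hwv
    obtain ⟨hK, hocc₁⟩ := hocc
    simp only [Formula.treeSize] at hgood hmu
    have hstep := fun u hu => (hgood u o le_rfl (by omega) hu).2
    refine ih β (o + 1) ρ S hocc₁ (fun X hX => (hβ X hX).trans (by omega)) hρ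
      (fun v q h h' => hgood v q (by omega) (by omega))
      (fun x t e h h' => hmu x t e (by omega) (by omega)) v ?_
    have hone : ∀ u, S.act u o → R i u v → S.act v (o + 1) := fun u hu huv =>
      hstep u hu (v, o + 1) (by simp [Strat.Step, hK, huv])
    rcases hwv with ⟨hT, rfl⟩ | hwv | ⟨h4, hwv⟩
    · exact hstep w hw (w, o + 1) (by simp [Strat.Step, hK, hT])
    · exact hone w hw hwv
    · obtain ⟨u, hwu, huv⟩ := Relation.TransGen.tail'_iff.1 hwv
      refine hone u ?_ huv
      clear huv hone hwv
      induction hwu with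
      | refl => exact hw
      | tail _ hbc ih => exact hstep _ ih (_, o) (by simp [Strat.Step, hK, hbc, h4])
  | mu X φ ih =>
    intro β o ρ S hocc hβ hρ hgood hmu
    obtain ⟨hK, hocc₁⟩ := hocc
    have hsize : o + (φ.mu X).treeSize = o + 1 + φ.treeSize := by
      simp only [Formula.treeSize]; omega
    rw [hsize] at hgood hmu
    obtain ⟨r, hr⟩ := hmu o _ _ le_rfl (by omega) hK
    let M : KModel Ag PVar := ⟨W, hne, frameClosure L R, V⟩
    have key : ∀ α : Ordinal.{0}, ∀ w, r (w, o) = α → S.act w o → w ∈ (φ.mu X).sem M ρ := by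
      intro α
      induction α using WellFoundedLT.induction with
      | _ α ihα =>
      intro w hα hw
      let S' : Strat W :=
        { act := fun v q => S.act v q ∧ (q = o → r (v, q) < r (w, o)) ∧ (o < q → r (v, q) ≤ r (w, o))
          c := S.c
          d := S.d }
      have hfix : φ.sem M (Function.update ρ X ((φ.mu X).sem M ρ)) ⊆ (φ.mu X).sem M ρ := by
        intro v hv T hT
        exact hT (φ.sem_update_mono M ρ X (Set.sInter_subset_of_mem hT) hv)
      apply hfix
      refine ih (Function.update β X o) (o + 1) (Function.update ρ X ((φ.mu X).sem M ρ)) S' hocc₁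
        (update_binder_lt hβ) ?_ ?_ ?_ w ?_
      · intro Y hY v hv
        rcases eq_or_ne Y X with rfl | h
        · rw [Function.update_self] at hv ⊢
          exact ihα _ (hα ▸ hv.2.1 rfl) v rfl hv.1
        · rw [Function.update_of_ne h] at hv ⊢
          exact hρ Y ⟨hY, h⟩ v hv.1
      · intro v q hq hqe hv
        obtain ⟨h₁, h₂⟩ := hgood v q (by omega) hqe hv.1
        refine ⟨h₁, fun b hb => ⟨h₂ b hb, fun h => ?_, fun h => ?_⟩⟩
        · have := hr (v, q) b ⟨by simp; omega, hqe, by omega, by omega, hv.1, hb⟩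
          exact (this.2 h).trans_le (hv.2.2 hq)
        · have hlt := hb.lt (hocc₁.below (update_binder_lt hβ) hq hqe) hqe
          have := hr (v, q) b ⟨by simp; omega, hqe, by omega, hlt, hv.1, hb⟩
          exact this.1.trans (hv.2.2 hq)
      · intro x t e hx hxe hKx
        obtain ⟨r', hr'⟩ := hmu x t e (by omega) hxe hKx
        exact ⟨r', fun a b ⟨h₁, h₂, h₃, h₄, h₅, h₆⟩ => hr' a b ⟨h₁, h₂, h₃, h₄, h₅.1, h₆⟩⟩
      · have hstep : S.Step K L R (w, o) (w, o + 1) := by simp [Strat.Step, hK]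
        refine ⟨(hgood w o le_rfl (by omega) hw).2 _ hstep, fun h => absurd h (by omega), fun _ => ?_⟩
        have := φ.treeSize_pos
        exact (hr (w, o) (w, o + 1) ⟨le_rfl, by simp; omega, by simp, by simp; omega, hw, hstep⟩).1
    exact fun w hw => key _ w rfl hw
  | nu X φ ih =>
    intro β o ρ S hocc hβ hρ hgood hmu w hw
    obtain ⟨hK, hocc₁⟩ := hocc
    simp only [Formula.treeSize] at hgood hmu
    refine ⟨{v | S.act v o}, fun v hv => ?_, hw⟩
    refine ih (Function.update β X o) (o + 1) (Function.update ρ X {v | S.act v o}) S hocc₁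
      (update_binder_lt hβ) ?_ (fun v q h h' => hgood v q (by omega) (by omega))
      (fun x t e h h' => hmu x t e (by omega) (by omega)) v
      ((hgood v o le_rfl (by omega) hv).2 (v, o + 1) (by simp [Strat.Step, hK]))
    intro Y hY u hu
    rcases eq_or_ne Y X with rfl | h
    · rw [Function.update_self] at hu ⊢
      exact hu
    · rw [Function.update_of_ne h] at hu ⊢
      exact hρ Y ⟨hY, h⟩ u hu

end Sound

/-! ### Finite strategies -/

section Folding

variable {K : ℕ → Instr Ag PVar} {L : Ag → Set FrameCond} {M : KModel Ag PVar} {n : ℕ}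

/-- The label of a state: its active positions and its choices below `n`. -/
noncomputable def Strat.label (S : Strat M.W) (n : ℕ) (w : M.W) :
    (Fin n → Bool) × (Fin n → Bool) :=
  open Classical in (fun q => decide (S.act w q), fun q => S.c w q)

theorem Strat.act_iff_of_label_eq {S : Strat M.W} {w v : M.W} (h : S.label n w = S.label n v)
    {q : ℕ} (hq : q < n) : S.act w q ↔ S.act v q := by
  have := congrFun (congrArg Prod.fst h) ⟨q, hq⟩
  simpa [Strat.label] using this

theorem Strat.c_eq_of_label_eq {S : Strat M.W} {w v : M.W} (h : S.label n w = S.label n v)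
    {q : ℕ} (hq : q < n) : S.c w q = S.c v q :=
  congrFun (congrArg Prod.snd h) ⟨q, hq⟩

/-- The directions `δ` from `w` that an agent `i` can see: those of its active diamonds, and a
designated one if `i` is serial. -/
def Strat.Edge (K : ℕ → Instr Ag PVar) (L : Ag → Set FrameCond) (n : ℕ) (S : Strat M.W) (i : Ag)
    (w : M.W) (δ : ℕ ⊕ Ag) : Prop :=
  (∃ q t, δ = .inl q ∧ q < n ∧ K q = .dia i t ∧ S.act w q) ∨ (δ = .inr i ∧ .D ∈ L i)

theorem Strat.Edge.of_label_eq {S : Strat M.W} {i : Ag} {w v : M.W} {δ : ℕ ⊕ Ag}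
    (h : S.Edge K L n i w δ) (hl : S.label n w = S.label n v) : S.Edge K L n i v δ := by
  rcases h with ⟨q, t, h₁, h₂, h₃, h₄⟩ | h
  · exact Or.inl ⟨q, t, h₁, h₂, h₃, (Strat.act_iff_of_label_eq hl h₂).1 h₄⟩
  · exact Or.inr h

/-- The strategy induced on a folding with projection `π` and successors `ch`. -/
def Strat.fold {F : Type} (S : Strat M.W) (π : F → M.W) (ch : F → ℕ ⊕ Ag → F) : Strat F where
  act s q := S.act (π s) q
  c s q := S.c (π s) q
  d s q := ch s (.inl q)

/-- The accessibility relation of a folding. -/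
def Strat.foldRel {F : Type} (K : ℕ → Instr Ag PVar) (L : Ag → Set FrameCond) (n : ℕ)
    (S : Strat M.W) (π : F → M.W) (ch : F → ℕ ⊕ Ag → F) (i : Ag) (s s' : F) : Prop :=
  ∃ δ, S.Edge K L n i (π s) δ ∧ s' = ch s δ

/-- A step of a folded strategy is a step at every state with the current label. -/
theorem Strat.fold_step {F : Type} {S : Strat M.W} {π : F → M.W} {ch : F → ℕ ⊕ Ag → F}
    {child : M.W → ℕ ⊕ Ag → M.W} (hd : ∀ w q, child w (.inl q) = S.d w q)
    (hedge : ∀ i w δ, S.Edge K L n i w δ → M.R i w (child w δ)) {s : F} {q : ℕ} (hq : q < n)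
    {b : F × ℕ} (h : (S.fold π ch).Step K L (S.foldRel K L n π ch) (s, q) b) :
    (b.1 = s ∧ ∀ w, S.label n w = S.label n (π s) → S.Step K L M.R (w, q) (w, b.2)) ∨
      ∃ δ, b.1 = ch s δ ∧ ∀ w, S.label n w = S.label n (π s) →
        S.Step K L M.R (w, q) (child w δ, b.2) := by
  unfold Strat.Step at h ⊢
  cases hK : K q with
  | prop | nprop | tt | ff => simp [hK] at h
  | goto t | mu t e | and l r =>
    simp only [hK] at h ⊢
    exact Or.inl ⟨h.1, fun w _ => ⟨trivial, h.2⟩⟩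
  | or l r =>
    simp only [hK] at h ⊢
    refine Or.inl ⟨h.1, fun w hw => ⟨trivial, ?_⟩⟩
    rw [h.2, Strat.c_eq_of_label_eq hw hq]
    rfl
  | dia i t =>
    simp only [hK] at h ⊢
    exact Or.inr ⟨.inl q, h.1, fun w _ => ⟨hd w q, h.2⟩⟩
  | box i t =>
    simp only [hK] at h ⊢
    rcases h with ⟨⟨δ, hδ, hb⟩, h⟩ | ⟨hT, hb, h⟩
    · exact Or.inr ⟨δ, hb, fun w hw => Or.inl ⟨hedge i w δ (hδ.of_label_eq hw.symm), h⟩⟩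
    · exact Or.inl ⟨hb, fun w _ => Or.inr ⟨hT, trivial, h⟩⟩

/-- A good ranked strategy can be folded to a finite one. -/
theorem Strat.exists_finite (hM : IsLModel L M) {S : Strat M.W} (hgood : S.Good K L M.R M.V 0 n)
    (hrank : S.MuRanked K L M.R 0 n) (hbelow : ∀ x < n, (K x).Below n)
    (hscope : ∀ x t e, x < n → K x = .mu t e → e ≤ n) (w₀ : M.W) :
    ∃ (F : Type) (_ : Finite F) (R : Ag → F → F → Prop) (V : F → Set PVar) (S' : Strat F),
      Nat.card F ≤ 2 ^ n * 2 ^ n * 2 ^ (n * n * (n * n)) ∧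
      (∀ i, .D ∈ L i → ∀ s, ∃ s', R i s s') ∧ S'.Good K L R V 0 n ∧ S'.MuRanked K L R 0 n ∧
      ∃ s, ∀ q < n, S'.act s q ↔ S.act w₀ q := by
  classical
  have hserial : ∀ i w, ∃ v, .D ∈ L i → M.R i w v := fun i w => by
    by_cases hD : .D ∈ L i
    · obtain ⟨v, hv⟩ := hM i _ hD w
      exact ⟨v, fun _ => hv⟩
    · exact ⟨w, fun h => absurd h hD⟩
  choose succ hsucc using hserial
  have hr : ∀ x : Fin n, ∃ r : M.W × ℕ → Ordinal.{0}, ∀ t e, K x = .mu t e →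
      ∀ a b, S.ScopeStep K L M.R x e a b → r b ≤ r a ∧ (b.2 = x → r b < r a) := fun x => by
    by_cases h : ∃ t e, K x = .mu t e
    · obtain ⟨t, e, hK⟩ := h
      obtain ⟨r, hr⟩ := hrank x t e x.1.zero_le x.2 hK
      refine ⟨r, fun t' e' hK' => ?_⟩
      obtain ⟨-, rfl⟩ := Instr.mu.inj (hK.symm.trans hK')
      exact hr
    · exact ⟨fun _ => 0, fun t e hK => absurd ⟨t, e, hK⟩ h⟩
  choose r hr using hr
  let child : M.W → ℕ ⊕ Ag → M.W := fun w δ => δ.elim (S.d w) (fun i => succ i w)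
  have hedge : ∀ i w δ, S.Edge K L n i w δ → M.R i w (child w δ) := by
    rintro i w δ (⟨q, t, rfl, hq, hK, hact⟩ | ⟨rfl, hD⟩)
    · have := (hgood w q q.zero_le hq hact).1
      simp only [Strat.Ok, hK] at this
      exact this
    · exact hsucc i w hD
  obtain ⟨F, hF, π, ch, hcard, hch, hcov, hbad⟩ := exists_finite_folding_of_rank (Q := Fin n × Fin n)
    (S.label n) child (fun w p => r p.1 (w, p.2))
  have hstep := fun (s : F) (q : ℕ) (hq : q < n) (b : F × ℕ)
    (h : (S.fold π ch).Step K L (S.foldRel K L n π ch) (s, q) b) =>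
      Strat.fold_step (child := child) (fun _ _ => rfl) hedge hq h
  refine ⟨F, hF, S.foldRel K L n π ch, fun s => M.V (π s), S.fold π ch, ?_, ?_, ?_, ?_, ?_⟩
  · simpa using hcard
  · exact fun i hD s => ⟨ch s (.inr i), .inr i, Or.inr ⟨rfl, hD⟩, rfl⟩
  · intro s q hq hqn hact
    obtain ⟨hok, hdem⟩ := hgood (π s) q hq hqn hact
    refine ⟨?_, fun b hb => ?_⟩
    · unfold Strat.Ok at hok ⊢
      cases hK : K q <;> simp only [hK] at hok ⊢
      · exact hok
      · exact hok
      · exact ⟨.inl q, Or.inl ⟨q, _, rfl, hqn, hK, hact⟩, rfl⟩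
    · have hlt := hb.lt (hbelow q hqn) hqn
      rcases hstep s q hqn b hb with ⟨h₁, h₂⟩ | ⟨δ, h₁, h₂⟩
      · rw [h₁]
        exact hdem _ (h₂ (π s) rfl)
      · rw [h₁]
        exact (Strat.act_iff_of_label_eq (hch s δ) hlt).2 (hdem _ (h₂ (π s) rfl))
  · intro x t e _ hxn hK
    have hen := hscope x t e hxn hK
    refine ranked_of_no_recurrent_seq fun f hf => ?_
    have hlt : ∀ i, (f i).2 < n := fun i => (hf i).2.1.trans_le hen
    refine hbad (fun i => (f i).1) (fun i => (⟨x, hxn⟩, ⟨(f i).2, hlt i⟩))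
      (fun i => (f (i + 1)).2 = x) fun i => ?_
    obtain ⟨h₁, h₂, h₃, h₄, h₅, h₆⟩ := hf i
    rcases hstep (f i).1 (f i).2 (hlt i) (f (i + 1)) h₆ with ⟨hs, h⟩ | ⟨δ, hs, h⟩
    · exact Or.inl ⟨hs, fun w hw => hr ⟨x, hxn⟩ t e hK (w, (f i).2) (w, (f (i + 1)).2)
        ⟨h₁, h₂, h₃, h₄, (Strat.act_iff_of_label_eq hw (hlt i)).2 h₅, h w hw⟩⟩
    · exact Or.inr ⟨δ, hs, fun w hw => hr ⟨x, hxn⟩ t e hK (w, (f i).2) (child w δ, (f (i + 1)).2)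
        ⟨h₁, h₂, h₃, h₄, (Strat.act_iff_of_label_eq hw (hlt i)).2 h₅, h w hw⟩⟩
  · obtain ⟨s, hs⟩ := hcov w₀
    exact ⟨s, fun q hq => Strat.act_iff_of_label_eq hs hq⟩

end Folding

/-! ### Size bounds -/

theorem Formula.treeSize_le_of_mem_subList {φ ψ : Formula Ag PVar LVar} (h : ψ ∈ φ.subList) :
    ψ.treeSize ≤ φ.treeSize := by
  induction φ with
  | prop | nprop | tt | ff | var =>
    simp only [Formula.subList, List.mem_singleton] at h
    rw [h]
  | and φ₁ φ₂ ih₁ ih₂ | or φ₁ φ₂ ih₁ ih₂ =>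
    simp only [Formula.subList, List.mem_cons, List.mem_append] at h
    simp only [Formula.treeSize]
    rcases h with rfl | h | h
    · simp only [Formula.treeSize]; omega
    · have := ih₁ h; omega
    · have := ih₂ h; omega
  | dia _ φ ih | box _ φ ih | mu _ φ ih | nu _ φ ih =>
    simp only [Formula.subList, List.mem_cons] at h
    simp only [Formula.treeSize]
    rcases h with rfl | h
    · simp only [Formula.treeSize]; omega
    · have := ih h; omega

section Size

variable [DecidableEq Ag] [DecidableEq PVar] [DecidableEq LVar]

theorem fsize_lt_fsize {φ ψ : Formula Ag PVar LVar} (hsub : ψ.subList ⊆ φ.subList)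
    (hmem : φ ∈ φ.subList) (hlt : ψ.treeSize < φ.treeSize) : fsize ψ < fsize φ := by
  refine Finset.card_lt_card ⟨fun χ hχ => List.mem_toFinset.2 (hsub (List.mem_toFinset.1 hχ)),
    fun h => ?_⟩
  have := Formula.treeSize_le_of_mem_subList (List.mem_toFinset.1 (h (List.mem_toFinset.2 hmem)))
  omega

theorem Formula.treeSize_lt_two_pow_fsize (φ : Formula Ag PVar LVar) :
    φ.treeSize < 2 ^ fsize φ := by
  induction φ with
  | prop | nprop | tt | ff | var => simp [Formula.treeSize, fsize, Formula.subList]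
  | and φ ψ ih₁ ih₂ | or φ ψ ih₁ ih₂ =>
    refine lt_of_lt_of_le ?_ (Nat.pow_le_pow_right two_pos (Nat.succ_le_of_lt (max_lt
      (fsize_lt_fsize (ψ := φ) ?_ ?_ ?_) (fsize_lt_fsize (ψ := ψ) ?_ ?_ ?_))))
    · have h₁ := Nat.pow_le_pow_right two_pos (le_max_left (fsize φ) (fsize ψ))
      have h₂ := Nat.pow_le_pow_right two_pos (le_max_right (fsize φ) (fsize ψ))
      rw [Nat.pow_succ]
      simp only [Formula.treeSize]
      omega
    all_goals simp [Formula.subList, Formula.treeSize]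
    all_goals omega
  | dia _ φ ih | box _ φ ih | mu _ φ ih | nu _ φ ih =>
    refine lt_of_lt_of_le ?_ (Nat.pow_le_pow_right two_pos (Nat.succ_le_of_lt
      (fsize_lt_fsize (ψ := φ) ?_ ?_ ?_)))
    · rw [Nat.pow_succ]
      simp only [Formula.treeSize]
      omega
    all_goals simp [Formula.subList, Formula.treeSize]

end Size

/-- A bound for the size of a folding of a formula with at most `m` subformulas. -/
def foldBound (m : ℕ) : ℕ :=
  2 ^ 2 ^ m * 2 ^ 2 ^ m * 2 ^ (2 ^ m * 2 ^ m * (2 ^ m * 2 ^ m))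

theorem computable_foldBound : Computable foldBound := by
  have hpow : Primrec fun m : ℕ => 2 ^ m :=
    (Primrec.nat_rec₁ 1 (f := fun _ v => v * 2)
      ((Primrec.nat_mul.comp Primrec.snd (Primrec.const 2)))).of_eq fun m => by
        induction m with
        | zero => rfl
        | succ m ih => simp only [] at ih ⊢; rw [ih, Nat.pow_succ]
  have hsq : Primrec fun m : ℕ => 2 ^ m * 2 ^ m := Primrec.nat_mul.comp hpow hpow
  have h₁ : Primrec fun m : ℕ => 2 ^ 2 ^ m := hpow.comp hpow
  exact (Primrec.nat_mul.comp (Primrec.nat_mul.comp h₁ h₁)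
    (hpow.comp (Primrec.nat_mul.comp hsq hsq))).to_comp

theorem le_foldBound {n m : ℕ} (h : n ≤ 2 ^ m) :
    2 ^ n * 2 ^ n * 2 ^ (n * n * (n * n)) ≤ foldBound m := by
  have h₁ : 2 ^ n ≤ 2 ^ 2 ^ m := Nat.pow_le_pow_right two_pos h
  exact Nat.mul_le_mul (Nat.mul_le_mul h₁ h₁) (Nat.pow_le_pow_right two_pos
    (Nat.mul_le_mul (Nat.mul_le_mul h h) (Nat.mul_le_mul h h)))

/-- if every agent's frame conditions in L are among D, T, 4, then
there is a computable κ : ℕ → ℕ such that every L-satisfiable closed formula φ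
is satisfied in an L-model with at most κ(|φ|) states. (Kozen's finite-model
theorem for the μ-calculus is taken as a hypothesis.) -/
theorem finite_model_property_DT4 [Fintype Ag] [Nonempty Ag]
    [DecidableEq Ag] [DecidableEq PVar] [DecidableEq LVar]
    (hKozen : ∃ κ0 : ℕ → ℕ, Computable κ0 ∧
      ∀ φ : Formula Ag PVar LVar, φ.Closed →
        LSatisfiable (fun _ => (∅ : Set FrameCond)) φ →
        ∃ (M : KModel Ag PVar), IsLModel (fun _ => (∅ : Set FrameCond)) M ∧
          Finite M.W ∧ Nat.card M.W ≤ κ0 (fsize φ) ∧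
          ∃ (w : M.W) (ρ : LVar → Set M.W), w ∈ Formula.sem M φ ρ)
    (L : Ag → Set FrameCond)
    (hL : ∀ a : Ag, L a ⊆ {FrameCond.D, FrameCond.T, FrameCond.four}) :
    ∃ κ : ℕ → ℕ, Computable κ ∧
      ∀ φ : Formula Ag PVar LVar, φ.Closed → LSatisfiable L φ →
        ∃ (M : KModel Ag PVar), IsLModel L M ∧
          Finite M.W ∧ Nat.card M.W ≤ κ (fsize φ) ∧
          ∃ (w : M.W) (ρ : LVar → Set M.W), w ∈ Formula.sem M φ ρ := by
  refine ⟨foldBound, computable_foldBound, fun φ hφ ⟨M, hM, w, ρ, hw⟩ => ?_⟩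
  have hfree : ∀ {P : LVar → Prop}, ∀ X ∈ φ.freeVars, P X := fun X hX => by
    rw [hφ] at hX
    exact absurd hX (Set.notMem_empty X)
  have hocc := occ_code φ (fun _ => 0) 0
  obtain ⟨S, -, hact, hgood, hrank⟩ := φ.exists_strat hM (fun _ => 0) 0 ρ
    ⟨fun _ _ => False, fun _ _ => false, fun w _ => w⟩ hocc hfree hfree
  rw [Nat.zero_add] at hgood hrank
  obtain ⟨F, hF, R, V, S', hcard, hD, hgood', hrank', s, hs⟩ := S.exists_finite hM hgood hrank
    (fun x hx => by simpa using hocc.below hfree x.zero_le (by simpa using hx))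
    (fun x t e hx hK => by simpa using (hocc.scope x.zero_le (by simpa using hx) hK).2) w
  refine ⟨⟨F, ⟨s⟩, frameClosure L R, V⟩, isLModel_frameClosure hL ⟨s⟩ hD V, hF,
    hcard.trans (le_foldBound φ.treeSize_lt_two_pow_fsize.le), s, fun _ => ∅, ?_⟩
  refine φ.mem_sem_of_strat (fun _ => 0) 0 _ S' hocc hfree hfree ?_ ?_ s
    ((hs 0 φ.treeSize_pos).2 (hact w hw))
  · rwa [Nat.zero_add]
  · rwa [Nat.zero_add]
end

section
/- For every set W and every symmetric binary relation R on W, the euclidean closure of R (the least euclidean relation containing R) is symmetric. -/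
/-- A relation is euclidean when s R t and s R r imply t R r. -/
def Euclidean {W : Type} (R : W → W → Prop) : Prop :=
  ∀ s t r : W, R s t → R s r → R t r

/-- The least euclidean relation containing `R`. -/
inductive EuclClosure {W : Type} (R : W → W → Prop) : W → W → Prop
  | base {s t : W} : R s t → EuclClosure R s t
  | eucl {s t u : W} : EuclClosure R s t → EuclClosure R s u → EuclClosure R t u

/-- the euclidean closure of a symmetric relation is symmetric. -/
theorem euclClosure_symmetric (W : Type) (R : W → W → Prop)
    (h : ∀ s t : W, R s t → R t s) :
    ∀ s t : W, EuclClosure R s t → EuclClosure R t s := by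
  intro s t hst
  cases hst with
  | base hR => exact .base (h _ _ hR)
  | eucl h₁ h₂ => exact .eucl h₂ h₁
end
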